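/- arXiv:2109.04522 — 7 statements merged into one kernel-verified Lean document; each statement's English description precedes it below -/
import Mathlib

section
/- Let {V_k}_{k≥0} be a sequence of non-negative real numbers satisfying V_{k+1} ≤ q·V_k + p·max_{(k−τ_k)_+ ≤ ℓ ≤ k} V_ℓ for all k ≥ 0, where q and p are non-negative constants and the delays satisfy 0 ≤ τ_k ≤ τ for some non-negative integer τ. If q + p < 1, then V_k ≤ ρ^k · V_0 for all k ≥ 0, where ρ = (q + p)^{1/(1+τ)}. -/
/-!
An antitone `B` with `V 0 ≤ B 0` and `(q + p) * B (k - τ) ≤ B (k + 1)` dominates `V`: as long as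
`V ≤ B` up to time `k`, both `V k` and the maximum of `V` over the delay window are at most
`B (k - τ)`. The sequence `B k = ρ ^ k * V 0` has this property as soon as `0 ≤ ρ ≤ 1` and
`q + p ≤ ρ ^ (τ + 1)`.
-/

theorem sup'_Icc_sub_le_of_antitone {α : Type*} [SemilatticeSup α] {V B : ℕ → α} {k d τ : ℕ}
    (hB : Antitone B) (hVB : ∀ l ≤ k, V l ≤ B l) (hd : d ≤ τ) :
    (Finset.Icc (k - d) k).sup' (Finset.nonempty_Icc.mpr (Nat.sub_le k d)) V ≤ B (k - τ) := by
  refine Finset.sup'_le _ _ fun l hl ↦ ?_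
  obtain ⟨hkl, hlk⟩ := Finset.mem_Icc.mp hl
  exact (hVB l hlk).trans (hB ((Nat.sub_le_sub_left hd k).trans hkl))

theorem mul_pow_sub_le_pow_succ {R : Type*} [Semiring R] [PartialOrder R] [IsOrderedRing R]
    {a ρ : R} {τ : ℕ} (hρ₀ : 0 ≤ ρ) (hρ₁ : ρ ≤ 1) (ha : a ≤ ρ ^ (τ + 1)) (k : ℕ) :
    a * ρ ^ (k - τ) ≤ ρ ^ (k + 1) :=
  calc a * ρ ^ (k - τ)
    _ ≤ ρ ^ (τ + 1) * ρ ^ (k - τ) := by gcongr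
    _ = ρ ^ (τ + 1 + (k - τ)) := (pow_add ..).symm
    _ ≤ ρ ^ (k + 1) := pow_le_pow_of_le_one hρ₀ hρ₁ (by lia)

section DelayedRecurrence

variable {R : Type*} [Semiring R] [SemilatticeSup R] [IsOrderedRing R]
  {V : ℕ → R} {q p : R} {τ : ℕ} {τk : ℕ → ℕ}

theorem le_of_delayed_recurrence_of_antitone {B : ℕ → R} (hq : 0 ≤ q) (hp : 0 ≤ p)
    (hτ : ∀ k, τk k ≤ τ)
    (hrec : ∀ k, V (k + 1) ≤ q * V k +
      p * (Finset.Icc (k - τk k) k).sup' (Finset.nonempty_Icc.mpr (Nat.sub_le k (τk k))) V)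
    (hB : Antitone B) (hVB : V 0 ≤ B 0) (hB_succ : ∀ k, (q + p) * B (k - τ) ≤ B (k + 1))
    (k : ℕ) : V k ≤ B k := by
  induction k using Nat.strong_induction_on with
  | _ n ih =>
    rcases n with _ | k
    · exact hVB
    have hVB_upto : ∀ l ≤ k, V l ≤ B l := fun l hl ↦ ih l (Nat.lt_succ_of_le hl)
    have hV_le : V k ≤ B (k - τ) := (hVB_upto k le_rfl).trans (hB (Nat.sub_le k τ))
    have hsup_le := sup'_Icc_sub_le_of_antitone hB hVB_upto (hτ k)
    calc V (k + 1)
      _ ≤ q * V k + p * (Finset.Icc (k - τk k) k).sup' _ V := hrec k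
      _ ≤ q * B (k - τ) + p * B (k - τ) := by gcongr
      _ = (q + p) * B (k - τ) := (add_mul ..).symm
      _ ≤ B (k + 1) := hB_succ k

theorem sequence_bounded_delay_linear_rate_general {ρ : R} (hV₀ : 0 ≤ V 0)
    (hq : 0 ≤ q) (hp : 0 ≤ p) (hτ : ∀ k, τk k ≤ τ)
    (hrec : ∀ k, V (k + 1) ≤ q * V k +
      p * (Finset.Icc (k - τk k) k).sup' (Finset.nonempty_Icc.mpr (Nat.sub_le k (τk k))) V)
    (hρ₀ : 0 ≤ ρ) (hρ₁ : ρ ≤ 1) (hqp : q + p ≤ ρ ^ (τ + 1)) (k : ℕ) :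
    V k ≤ ρ ^ k * V 0 := by
  have hanti : Antitone fun k ↦ ρ ^ k * V 0 := (pow_right_anti₀ hρ₀ hρ₁).mul_const hV₀
  refine le_of_delayed_recurrence_of_antitone hq hp hτ hrec hanti (by simp) (fun k ↦ ?_) k
  rw [← mul_assoc]
  exact mul_le_mul_of_nonneg_right (mul_pow_sub_le_pow_succ hρ₀ hρ₁ hqp k) hV₀

end DelayedRecurrence

theorem rpow_one_div_one_add_natCast_pow_succ {x : ℝ} (hx : 0 ≤ x) (n : ℕ) :
    (x ^ ((1 : ℝ) / (1 + (n : ℝ)))) ^ (n + 1) = x := by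
  simpa [add_comm] using Real.rpow_inv_natCast_pow hx n.succ_ne_zero

/-- Lemma 1: linear convergence of non-negative sequences satisfying a delayed
recurrence with bounded delays.  Here `(k - τk k)` uses truncated natural
subtraction, which realizes `(k − τ_k)_+`, and the maximum over
`(k−τ_k)_+ ≤ ℓ ≤ k` is `Finset.sup'` over `Finset.Icc`. -/
theorem sequence_bounded_delay_linear_rate
    (V : ℕ → ℝ) (q p : ℝ) (τ : ℕ) (τk : ℕ → ℕ)
    (hV : ∀ k, 0 ≤ V k) (hq : 0 ≤ q) (hp : 0 ≤ p)
    (hτ : ∀ k, τk k ≤ τ)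
    (hrec : ∀ k, V (k + 1) ≤ q * V k +
      p * (Finset.Icc (k - τk k) k).sup'
            (Finset.nonempty_Icc.mpr (Nat.sub_le k (τk k))) V)
    (hqp : q + p < 1) :
    ∀ k, V k ≤ ((q + p) ^ ((1 : ℝ) / (1 + (τ : ℝ)))) ^ k * V 0 := by
  have hqp₀ : 0 ≤ q + p := add_nonneg hq hp
  exact sequence_bounded_delay_linear_rate_general (hV 0) hq hp hτ hrec
    (Real.rpow_nonneg hqp₀ _) (Real.rpow_le_one hqp₀ hqp.le (by positivity))
    (rpow_one_div_one_add_natCast_pow_succ hqp₀ τ).ge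
end

section
/- Let {V_k}_{k≥0} be a sequence of non-negative real numbers satisfying V_{k+1} ≤ q·V_k + p·max_{(k−τ_k)_+ ≤ ℓ ≤ k} V_ℓ for all k ≥ 0, where q and p are non-negative constants. Suppose the delay sequence {τ_k} of non-negative integers satisfies lim_{k→∞} (k − τ_k) = +∞. If q + p < 1, then V_k converges to 0 as k → ∞. -/
/-!
Put `c = q + p`. Any bound `M` for `V` on the window `[k - τ_k, k]` gives `V (k + 1) ≤ c * M`. In
particular `V` never exceeds `V 0`. Since the windows drift to infinity, a bound `M` valid from some
index on holds on all late windows and so improves to `c * M` from some later index on. Iterating,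
`V` is eventually below `c ^ n * V 0` for every `n`.
-/

open Filter Finset Topology

/-- `V` contracts by the factor `c` along the windows `[σ k, k]`: each new term is at most `c` times
any upper bound for the terms in the window preceding it. Quantifying over upper bounds keeps the
definition free of the nonemptiness proof that a maximum over the window would carry. -/
def WindowContraction {R : Type*} [Mul R] [LE R] (V : ℕ → R) (σ : ℕ → ℕ) (c : R) : Prop :=
  ∀ ⦃k : ℕ⦄ ⦃M : R⦄, (∀ l ∈ Icc (σ k) k, V l ≤ M) → V (k + 1) ≤ c * M

namespace WindowContraction

variable {R : Type*} {V : ℕ → R} {σ : ℕ → ℕ} {c M : R}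

theorem of_le_mul_add_mul_sup' [Semiring R] [LinearOrder R] [IsOrderedRing R] {q p : R}
    (hq : 0 ≤ q) (hp : 0 ≤ p) (hσ : ∀ k, σ k ≤ k)
    (hrec : ∀ k, V (k + 1) ≤ q * V k + p * (Icc (σ k) k).sup' (nonempty_Icc.mpr (hσ k)) V) :
    WindowContraction V σ (q + p) := by
  intro k M hM
  have hVk : V k ≤ M := hM k (right_mem_Icc.mpr (hσ k))
  calc V (k + 1) ≤ q * V k + p * (Icc (σ k) k).sup' (nonempty_Icc.mpr (hσ k)) V := hrec k
    _ ≤ q * M + p * M := by gcongr; exact sup'_le _ _ hM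
    _ = (q + p) * M := (add_mul q p M).symm

theorem le_apply_zero [Semiring R] [PartialOrder R] [IsOrderedRing R]
    (h : WindowContraction V σ c) (hc : c ≤ 1) (hV₀ : 0 ≤ V 0) (k : ℕ) : V k ≤ V 0 := by
  induction k using Nat.strong_induction_on with
  | _ k ih =>
    cases k with
    | zero => exact le_rfl
    | succ k =>
      calc V (k + 1) ≤ c * V 0 :=
            h fun l hl => ih l (Nat.lt_succ_of_le (mem_Icc.mp hl).2)
        _ ≤ V 0 := mul_le_of_le_one_left hV₀ hc

theorem eventually_le_mul [Mul R] [LE R] (h : WindowContraction V σ c)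
    (hσ : Tendsto σ atTop atTop) (hM : ∀ᶠ k in atTop, V k ≤ M) :
    ∀ᶠ k in atTop, V k ≤ c * M := by
  obtain ⟨K, hK⟩ := eventually_atTop.mp hM
  have hstep : ∀ᶠ k in atTop, V (k + 1) ≤ c * M := by
    filter_upwards [hσ.eventually_ge_atTop K] with k hk
    exact h fun l hl => hK l (hk.trans (mem_Icc.mp hl).1)
  rw [← map_add_atTop_eq_nat 1]
  exact eventually_map.mpr hstep

theorem eventually_le_pow_mul [Monoid R] [LE R] (h : WindowContraction V σ c)
    (hσ : Tendsto σ atTop atTop) (hM : ∀ᶠ k in atTop, V k ≤ M) (n : ℕ) :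
    ∀ᶠ k in atTop, V k ≤ c ^ n * M := by
  induction n with
  | zero => simpa only [pow_zero, one_mul] using hM
  | succ n ih => simpa only [pow_succ', mul_assoc] using h.eventually_le_mul hσ ih

theorem tendsto_zero [Field R] [LinearOrder R] [IsStrictOrderedRing R] [Archimedean R]
    [TopologicalSpace R] [OrderTopology R] (h : WindowContraction V σ c)
    (hσ : Tendsto σ atTop atTop) (hV : ∀ k, 0 ≤ V k) (hc₀ : 0 ≤ c) (hc₁ : c < 1) :
    Tendsto V atTop (𝓝 0) := by
  have hbound : ∀ᶠ k in atTop, V k ≤ V 0 := .of_forall (h.le_apply_zero hc₁.le (hV 0))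
  have hgeom : Tendsto (fun n : ℕ => c ^ n * V 0) atTop (𝓝 0) := by
    simpa only [zero_mul] using
      (tendsto_pow_atTop_nhds_zero_of_lt_one hc₀ hc₁).mul_const (V 0)
  refine tendsto_order.mpr ⟨fun a ha => .of_forall fun k => ha.trans_le (hV k), fun ε hε => ?_⟩
  obtain ⟨n, hn⟩ := (hgeom.eventually_lt_const hε).exists
  exact (h.eventually_le_pow_mul hσ hbound n).mono fun k hk => hk.trans_lt hn

end WindowContraction

/-- Lemma 2: asymptotic convergence of non-negative sequences satisfying a delayed
recurrence where the (possibly unbounded) delays satisfy `k − τ_k → ∞`.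
Truncated natural subtraction `k - τk k` realizes `(k − τ_k)_+`. -/
theorem sequence_unbounded_delay_convergence
    (V : ℕ → ℝ) (q p : ℝ) (τk : ℕ → ℕ)
    (hV : ∀ k, 0 ≤ V k) (hq : 0 ≤ q) (hp : 0 ≤ p)
    (hrec : ∀ k, V (k + 1) ≤ q * V k +
      p * (Finset.Icc (k - τk k) k).sup'
            (Finset.nonempty_Icc.mpr (Nat.sub_le k (τk k))) V)
    (hτ : Filter.Tendsto (fun k => k - τk k) Filter.atTop Filter.atTop)
    (hqp : q + p < 1) :
    Filter.Tendsto V Filter.atTop (nhds 0) := by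
  have hcontract : WindowContraction V (fun k => k - τk k) (q + p) :=
    .of_le_mul_add_mul_sup' hq hp (fun k => Nat.sub_le k (τk k)) hrec
  exact hcontract.tendsto_zero hτ hV (add_nonneg hq hp) hqp
end

section
/- Let {V_k}_{k≥0} be a sequence of non-negative real numbers satisfying V_{k+1} ≤ q·V_k + p·max_{(k−τ_k)_+ ≤ ℓ ≤ k} V_ℓ for all k ≥ 0, with non-negative constants q, p such that q + p < 1, and non-negative integer delays τ_k. Suppose there exists a function Λ : ℝ → ℝ such that (i) Λ(0) = 1, (ii) Λ is non-increasing, and (iii) lim_{k→∞} Λ(k) = 0 and (q + p)·Λ(k − τ_k) ≤ Λ(k+1) for all k ≥ 0. Then V_k ≤ Λ(k)·V_0 for all k ≥ 0. -/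
/-!
The step `V ↦ q * V k + p * max V` over the delay window is monotone in `V` and sees only the past,
so a sequence that grows at most by this step stays below any sequence that grows at least by it.
For an antitone `W` the maximum over the window is attained at its left end, hence the step of `W`
is at most `(q + p) * W (k - τ k)`; the hypothesis on `Λ` says that `W k = Λ k * V 0` grows at least
by that much.
-/

section DelayedStep

variable {R : Type*} [SemilatticeSup R]

/-- The maximum of `V` over the delay window `{k - τ k, …, k}`. The truncated subtraction of `ℕ`
cuts the window off at `0`. -/
def delayedMax (τ : ℕ → ℕ) (V : ℕ → R) (k : ℕ) : R :=
  (Finset.Icc (k - τ k) k).sup' (Finset.nonempty_Icc.mpr (Nat.sub_le k (τ k))) V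

theorem delayedMax_le_delayedMax (τ : ℕ → ℕ) {V W : ℕ → R} {k : ℕ} (hVW : ∀ l ≤ k, V l ≤ W l) :
    delayedMax τ V k ≤ delayedMax τ W k :=
  Finset.sup'_mono_fun fun l hl => hVW l (Finset.mem_Icc.mp hl).2

theorem delayedMax_eq_of_antitone (τ : ℕ → ℕ) {W : ℕ → R} (hW : Antitone W) (k : ℕ) :
    delayedMax τ W k = W (k - τ k) :=
  le_antisymm (Finset.sup'_le _ _ fun _ hl => hW (Finset.mem_Icc.mp hl).1)
    (Finset.le_sup' W (Finset.left_mem_Icc.mpr (Nat.sub_le k (τ k))))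

variable [Semiring R]

/-- The right-hand side of the delayed recurrence `V (k + 1) ≤ q * V k + p * max V`, as a function
of the sequence `V` and the time `k`. -/
def delayedStep (q p : R) (τ : ℕ → ℕ) (V : ℕ → R) (k : ℕ) : R :=
  q * V k + p * delayedMax τ V k

variable [IsOrderedRing R] {q p : R} {τ : ℕ → ℕ} {V W : ℕ → R}

theorem delayedStep_le_delayedStep (hq : 0 ≤ q) (hp : 0 ≤ p) {k : ℕ}
    (hVW : ∀ l ≤ k, V l ≤ W l) : delayedStep q p τ V k ≤ delayedStep q p τ W k :=
  add_le_add (mul_le_mul_of_nonneg_left (hVW k le_rfl) hq)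
    (mul_le_mul_of_nonneg_left (delayedMax_le_delayedMax τ hVW) hp)

theorem le_of_le_delayedStep_of_delayedStep_le (hq : 0 ≤ q) (hp : 0 ≤ p) (h0 : V 0 ≤ W 0)
    (hV : ∀ k, V (k + 1) ≤ delayedStep q p τ V k)
    (hW : ∀ k, delayedStep q p τ W k ≤ W (k + 1)) (k : ℕ) : V k ≤ W k := by
  induction k using Nat.strong_induction_on with
  | _ n ih =>
    cases n with
    | zero => exact h0
    | succ k =>
      calc V (k + 1) ≤ delayedStep q p τ V k := hV k
        _ ≤ delayedStep q p τ W k :=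
          delayedStep_le_delayedStep hq hp fun l hl => ih l (Nat.lt_succ_of_le hl)
        _ ≤ W (k + 1) := hW k

theorem delayedStep_le_of_antitone (hq : 0 ≤ q) (hW : Antitone W) (k : ℕ) :
    delayedStep q p τ W k ≤ (q + p) * W (k - τ k) := by
  rw [delayedStep, delayedMax_eq_of_antitone τ hW, add_mul]
  gcongr
  exact hW (Nat.sub_le k (τ k))

theorem sequence_delay_rate_via_comparison_function_general (hq : 0 ≤ q) (hp : 0 ≤ p)
    (hV0 : 0 ≤ V 0) (hV : ∀ k, V (k + 1) ≤ delayedStep q p τ V k)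
    {Λ : ℕ → R} (hΛ0 : 1 ≤ Λ 0) (hΛ : Antitone Λ)
    (hΛrec : ∀ k, (q + p) * Λ (k - τ k) ≤ Λ (k + 1)) (k : ℕ) :
    V k ≤ Λ k * V 0 := by
  have hW : Antitone fun n => Λ n * V 0 := hΛ.mul_const hV0
  refine le_of_le_delayedStep_of_delayedStep_le (W := fun n => Λ n * V 0) hq hp
    (le_mul_of_one_le_left hV0 hΛ0) hV (fun n => ?_) k
  calc delayedStep q p τ (fun n => Λ n * V 0) n
      ≤ (q + p) * (Λ (n - τ n) * V 0) := delayedStep_le_of_antitone hq hW n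
    _ = (q + p) * Λ (n - τ n) * V 0 := (mul_assoc _ _ _).symm
    _ ≤ Λ (n + 1) * V 0 := mul_le_mul_of_nonneg_right (hΛrec n) hV0

end DelayedStep

theorem natCast_sub_natCast_le_natCast_tsub {R : Type*} [Ring R] [PartialOrder R] [IsOrderedRing R]
    (m n : ℕ) : (m : R) - n ≤ ((m - n : ℕ) : R) :=
  sub_le_iff_le_add.mpr (mod_cast Nat.mono_cast (le_tsub_add : m ≤ m - n + n))

/-- Lemma 3: rate estimates for delayed recurrences via a comparison function `Λ`.
Truncated natural subtraction `k - τk k` realizes `(k − τ_k)_+` in the recurrence,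
while in condition (iii) the argument `k − τ_k` of `Λ : ℝ → ℝ` is taken in `ℝ`. -/
theorem sequence_delay_rate_via_comparison_function
    (V : ℕ → ℝ) (q p : ℝ) (τk : ℕ → ℕ)
    (hV : ∀ k, 0 ≤ V k) (hq : 0 ≤ q) (hp : 0 ≤ p)
    (hrec : ∀ k, V (k + 1) ≤ q * V k +
      p * (Finset.Icc (k - τk k) k).sup'
            (Finset.nonempty_Icc.mpr (Nat.sub_le k (τk k))) V)
    (hqp : q + p < 1)
    (Λ : ℝ → ℝ)
    (hΛ0 : Λ 0 = 1)
    (hΛmono : ∀ s t : ℝ, s ≤ t → Λ t ≤ Λ s)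
    (hΛlim : Filter.Tendsto (fun k : ℕ => Λ k) Filter.atTop (nhds 0))
    (hΛrec : ∀ k : ℕ, (q + p) * Λ ((k : ℝ) - (τk k : ℝ)) ≤ Λ ((k : ℝ) + 1)) :
    ∀ k : ℕ, V k ≤ Λ k * V 0 := by
  have hΛ : Antitone Λ := hΛmono
  have hΛtsub (k : ℕ) := hΛ (natCast_sub_natCast_le_natCast_tsub k (τk k))
  exact sequence_delay_rate_via_comparison_function_general hq hp (hV 0) hrec
    (Λ := fun n => Λ n) (by simp [hΛ0]) (hΛ.comp_monotone Nat.mono_cast) fun k =>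
      (mul_le_mul_of_nonneg_left (hΛtsub k) (add_nonneg hq hp)).trans (by simpa using hΛrec k)
end

section
/- Let {V_k}_{k≥0} be a sequence of non-negative real numbers satisfying V_{k+1} ≤ q·V_k + p·max_{(k−τ_k)_+ ≤ ℓ ≤ k} V_ℓ for all k ≥ 0, where q and p are non-negative constants with q + p < 1. Suppose the non-negative integer delays satisfy τ_k ≤ α·k + β for all k ≥ 0, where α ∈ (0,1) and β ≥ 0. Then V_k ≤ (α·k/(1 − α + β) + 1)^{−η} · V_0 for all k ≥ 0, where η = ln(q+p)/ln(1−α). -/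
/-!
An antitone supersolution `W`, one with `(q + p) * W (k - τ k) ≤ W (k + 1)`, dominates every
solution of the delayed recurrence that starts below it, because every term in the delay window is
bounded by `W` at the left end of the window. For linearly growing delays the affine function
`g x = α * x / (1 - α + β) + 1` satisfies `(1 - α) * g (k + 1) ≤ g (k - τ k)`, and `η` is chosen so
that `(1 - α) ^ η = q + p` when `q + p > 0`; hence `g ^ (-η)` is a supersolution.
-/

theorem le_of_delayed_recurrence {R : Type*} [Semiring R] [LinearOrder R] [IsOrderedRing R]
    {V W : ℕ → R} {q p : R} {s : ℕ → ℕ} (hs : ∀ k, s k ≤ k) (hq : 0 ≤ q) (hp : 0 ≤ p)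
    (hV : ∀ k, V (k + 1) ≤
      q * V k + p * (Finset.Icc (s k) k).sup' (Finset.nonempty_Icc.mpr (hs k)) V)
    (hW : ∀ k, (q + p) * W (s k) ≤ W (k + 1)) (hW_anti : Antitone W) (h0 : V 0 ≤ W 0) (k : ℕ) :
    V k ≤ W k := by
  induction k using Nat.strong_induction_on with
  | _ n ih =>
    rcases n with _ | k
    · exact h0
    have hwindow : ∀ l ∈ Finset.Icc (s k) k, V l ≤ W (s k) := fun l hl =>
      have ⟨hsl, hlk⟩ := Finset.mem_Icc.mp hl
      (ih l (Nat.lt_succ_of_le hlk)).trans (hW_anti hsl)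
    calc V (k + 1)
        ≤ q * V k + p * (Finset.Icc (s k) k).sup' (Finset.nonempty_Icc.mpr (hs k)) V := hV k
      _ ≤ q * W (s k) + p * W (s k) := by
          gcongr
          · exact hwindow k (Finset.right_mem_Icc.mpr (hs k))
          · exact Finset.sup'_le _ _ hwindow
      _ = (q + p) * W (s k) := (add_mul q p _).symm
      _ ≤ W (k + 1) := hW k

section BaseLtOne

variable {b c : ℝ}

theorem logb_nonneg_of_base_lt_one_of_le_one (hb0 : 0 < b) (hb1 : b < 1) (hc0 : 0 ≤ c)
    (hc1 : c ≤ 1) : 0 ≤ Real.logb b c :=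
  div_nonneg_of_nonpos (Real.log_nonpos hc0 hc1) (Real.log_neg hb0 hb1).le

-- The inequality is strict at `c = 0`, where `Real.logb b 0 = 0`.
theorem le_rpow_logb (hb0 : 0 < b) (hb1 : b ≠ 1) (hc : 0 ≤ c) : c ≤ b ^ Real.logb b c := by
  rcases hc.eq_or_lt with rfl | hc_pos
  · exact Real.rpow_nonneg hb0.le _
  · exact (Real.rpow_logb hb0 hb1 hc_pos).ge

theorem mul_rpow_neg_logb_le {x y : ℝ} (hb0 : 0 < b) (hb1 : b < 1) (hc0 : 0 ≤ c) (hc1 : c ≤ 1)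
    (hy : 0 < y) (hyx : b * y ≤ x) :
    c * x ^ (-Real.logb b c) ≤ y ^ (-Real.logb b c) := by
  have hη : -Real.logb b c ≤ 0 :=
    neg_nonpos.mpr (logb_nonneg_of_base_lt_one_of_le_one hb0 hb1 hc0 hc1)
  calc c * x ^ (-Real.logb b c)
      ≤ b ^ Real.logb b c * (b * y) ^ (-Real.logb b c) :=
        mul_le_mul (le_rpow_logb hb0 hb1.ne hc0)
          (Real.rpow_le_rpow_of_nonpos (mul_pos hb0 hy) hyx hη)
          (Real.rpow_nonneg ((mul_pos hb0 hy).le.trans hyx) _) (Real.rpow_nonneg hb0.le _)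
    _ = b ^ Real.logb b c * b ^ (-Real.logb b c) * y ^ (-Real.logb b c) := by
        rw [Real.mul_rpow hb0.le hy.le, mul_assoc]
    _ = y ^ (-Real.logb b c) := by
        rw [← Real.rpow_add hb0, add_neg_cancel, Real.rpow_zero, one_mul]

end BaseLtOne

-- The denominator `1 - α + β` is what makes this an equality at `m = (1 - α) * x - β`.
theorem one_sub_mul_affine_le {K : Type*} [Field K] [LinearOrder K] [IsStrictOrderedRing K]
    {α β x m : K} (hα : 0 ≤ α) (hD : 0 < 1 - α + β) (hm : (1 - α) * x - β ≤ m) :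
    (1 - α) * (α * (x + 1) / (1 - α + β) + 1) ≤ α * m / (1 - α + β) + 1 :=
  calc (1 - α) * (α * (x + 1) / (1 - α + β) + 1)
      = α * ((1 - α) * x - β) / (1 - α + β) + 1 := by
        field_simp
        ring
    _ ≤ α * m / (1 - α + β) + 1 := by gcongr

theorem antitone_affine_rpow_neg {a η : ℝ} (ha : 0 ≤ a) (hη : 0 ≤ η) :
    Antitone fun k : ℕ => (a * k + 1) ^ (-η) := fun m n hmn =>
  Real.rpow_le_rpow_of_nonpos (by positivity) (by gcongr) (neg_nonpos.mpr hη)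

theorem sequence_linearly_growing_delay_polynomial_rate_general
    {V : ℕ → ℝ} {q p : ℝ} {τ : ℕ → ℕ} {α β : ℝ}
    (hV0 : 0 ≤ V 0) (hq : 0 ≤ q) (hp : 0 ≤ p) (hα0 : 0 < α) (hα1 : α < 1)
    (hτ : ∀ k : ℕ, (τ k : ℝ) ≤ α * k + β)
    (hrec : ∀ k, V (k + 1) ≤ q * V k +
      p * (Finset.Icc (k - τ k) k).sup' (Finset.nonempty_Icc.mpr (Nat.sub_le k (τ k))) V)
    (hqp : q + p ≤ 1) (k : ℕ) :
    V k ≤ (α * k / (1 - α + β) + 1) ^ (-(Real.log (q + p) / Real.log (1 - α))) * V 0 := by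
  have hβ : 0 ≤ β := by simpa using (Nat.cast_nonneg (τ 0)).trans (hτ 0)
  have hb0 : 0 < 1 - α := sub_pos.mpr hα1
  have hb1 : 1 - α < 1 := sub_lt_self 1 hα0
  have hD : 0 < 1 - α + β := add_pos_of_pos_of_nonneg hb0 hβ
  have hc : 0 ≤ q + p := add_nonneg hq hp
  have hη := logb_nonneg_of_base_lt_one_of_le_one hb0 hb1 hc hqp
  have hanti := antitone_affine_rpow_neg (div_pos hα0 hD).le hη
  simp only [div_mul_eq_mul_div] at hanti
  rw [Real.log_div_log]
  refine le_of_delayed_recurrence (fun k => Nat.sub_le k (τ k)) hq hp hrec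
    (W := fun k => (α * k / (1 - α + β) + 1) ^ (-Real.logb (1 - α) (q + p)) * V 0)
    (fun k => ?_) (hanti.mul_const hV0) (by simp) k
  have hwindow : (1 - α) * k - β ≤ (k - τ k : ℕ) := by
    have : (k : ℝ) ≤ (k - τ k : ℕ) + τ k := mod_cast le_tsub_add
    linarith [hτ k]
  have hscale := one_sub_mul_affine_le hα0.le hD hwindow
  rw [← mul_assoc, Nat.cast_succ]
  gcongr
  exact mul_rpow_neg_logb_le hb0 hb1 hc hqp (by positivity) hscale

/-- Corollary 1: polynomial convergence rate for delayed recurrences with delays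
growing at most linearly, `τ_k ≤ α k + β` with `α ∈ (0,1)`, `β ≥ 0`.
Truncated natural subtraction `k - τk k` realizes `(k − τ_k)_+`, and
`x ^ (-η)` is the real power `Real.rpow` with `η = ln(q+p)/ln(1−α)`. -/
theorem sequence_linearly_growing_delay_polynomial_rate
    (V : ℕ → ℝ) (q p : ℝ) (τk : ℕ → ℕ) (α β : ℝ)
    (hV : ∀ k, 0 ≤ V k) (hq : 0 ≤ q) (hp : 0 ≤ p)
    (hα0 : 0 < α) (hα1 : α < 1) (hβ : 0 ≤ β)
    (hτ : ∀ k : ℕ, (τk k : ℝ) ≤ α * k + β)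
    (hrec : ∀ k, V (k + 1) ≤ q * V k +
      p * (Finset.Icc (k - τk k) k).sup'
            (Finset.nonempty_Icc.mpr (Nat.sub_le k (τk k))) V)
    (hqp : q + p < 1) :
    ∀ k : ℕ, V k ≤
      (α * k / (1 - α + β) + 1) ^ (-(Real.log (q + p) / Real.log (1 - α))) * V 0 :=
  sequence_linearly_growing_delay_polynomial_rate_general (hV 0) hq hp hα0 hα1 hτ hrec hqp.le
end

section
/- Let f : ℝ^d → ℝ be L-smooth and μ-strongly convex with minimizer x⋆, let τ be a non-negative integer, and let the delayed gradient iterates be x_{k+1} = x_k − γ·∇f(x_{k−τ}) for k ≥ 0 (with the convention x_j = x_0 for j < 0), where γ ∈ (0, 2/(μ+L)]. Define ω_k = 2γ·⟨∇f(x_k) − ∇f(x_{k−τ}), x_k − γ∇f(x_k) − x⋆⟩ + γ²·‖∇f(x_k) − ∇f(x_{k−τ})‖². Then for every k ≥ 0, ω_k ≤ (γ⁴L⁴τ² + 2γ²L²τ) · max_{(k−2τ)_+ ≤ ℓ ≤ k} ‖x_ℓ − x⋆‖². -/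
open scoped RealInnerProductSpace

/-!
Write `g = ∇f(x_k) - ∇f(x_{k-τ})` and `M = max_ℓ ‖x_ℓ - x⋆‖` over the last `2τ` iterates. Since
`∇f(x⋆) = 0`, smoothness bounds every step taken since time `k - τ` by `γLM`, so
`‖x_k - x_{k-τ}‖ ≤ τγLM` and `‖g‖ ≤ γL²τM`. A smooth convex gradient is cocoercive
(Baillon–Haddad), so for `γ ≤ 2 / L` the undelayed gradient step does not move away from `x⋆` and
`‖x_k - γ∇f(x_k) - x⋆‖ ≤ M`. Cauchy–Schwarz combines the two bounds.
-/

section InnerProduct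

variable {E : Type*} [SeminormedAddCommGroup E] [InnerProductSpace ℝ E]

theorem norm_sub_smul_le_of_mul_norm_sq_le_inner {c γ : ℝ} {g p : E} (hγ0 : 0 ≤ γ)
    (hγ : γ ≤ 2 * c) (hgp : c * ‖g‖ ^ 2 ≤ ⟪g, p⟫) : ‖p - γ • g‖ ≤ ‖p‖ := by
  refine le_of_sq_le_sq ?_ (norm_nonneg p)
  have hstep : γ * ‖g‖ ^ 2 ≤ 2 * ⟪g, p⟫ :=
    calc γ * ‖g‖ ^ 2 ≤ 2 * c * ‖g‖ ^ 2 := by gcongr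
      _ ≤ 2 * ⟪g, p⟫ := by linarith
  calc ‖p - γ • g‖ ^ 2 = ‖p‖ ^ 2 - γ * (2 * ⟪g, p⟫ - γ * ‖g‖ ^ 2) := by
        rw [norm_sub_sq_real, real_inner_smul_right, real_inner_comm, norm_smul, mul_pow,
          Real.norm_eq_abs, sq_abs]
        ring
    _ ≤ ‖p‖ ^ 2 := sub_le_self _ (mul_nonneg hγ0 (sub_nonneg.2 hstep))

theorem two_mul_inner_add_norm_sq_le {c γ M : ℝ} {g p : E} (hγ : 0 ≤ γ)
    (hg : ‖g‖ ≤ c * M) (hp : ‖p‖ ≤ M) :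
    2 * γ * ⟪g, p⟫ + γ ^ 2 * ‖g‖ ^ 2 ≤ (γ ^ 2 * c ^ 2 + 2 * γ * c) * M ^ 2 := by
  have hinner : ⟪g, p⟫ ≤ c * M * M :=
    (real_inner_le_norm g p).trans
      (mul_le_mul hg hp (norm_nonneg p) ((norm_nonneg g).trans hg))
  calc 2 * γ * ⟪g, p⟫ + γ ^ 2 * ‖g‖ ^ 2
      ≤ 2 * γ * (c * M * M) + γ ^ 2 * (c * M) ^ 2 := by gcongr
    _ = (γ ^ 2 * c ^ 2 + 2 * γ * c) * M ^ 2 := by ring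

end InnerProduct

section Gradient

variable {E : Type*} [NormedAddCommGroup E] [InnerProductSpace ℝ E] [CompleteSpace E]
  {f : E → ℝ} {L : ℝ}

theorem gradient_eq_zero_of_forall_le {a : E} (hmin : ∀ y, f a ≤ f y) : gradient f a = 0 := by
  have hlocal : IsLocalMin f a := Filter.Eventually.of_forall hmin
  rw [gradient, hlocal.fderiv_eq_zero, map_zero]

theorem hasDerivAt_comp_add_smul_gradient {a v : E} {t : ℝ}
    (hdiff : DifferentiableAt ℝ f (a + t • v)) :
    HasDerivAt (fun t : ℝ => f (a + t • v)) ⟪gradient f (a + t • v), v⟫ t := by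
  have hline : HasDerivAt (fun t : ℝ => a + t • v) v t := by
    simpa using ((hasDerivAt_id t).smul_const v).const_add a
  rw [inner_gradient_left]
  exact hdiff.hasFDerivAt.comp_hasDerivAt t hline

theorem le_add_inner_gradient_add_norm_sq (hdiff : Differentiable ℝ f) {a : E}
    (hsmooth : ∀ b, ‖gradient f b - gradient f a‖ ≤ L * ‖b - a‖) (v : E) :
    f (a + v) ≤ f a + ⟪gradient f a, v⟫ + L / 2 * ‖v‖ ^ 2 := by
  have hf (t : ℝ) := hasDerivAt_comp_add_smul_gradient (hdiff (a + t • v))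
  have hB (t : ℝ) : HasDerivAt
      (fun t : ℝ => f a + t * ⟪gradient f a, v⟫ + L / 2 * ‖v‖ ^ 2 * t ^ 2)
      (⟪gradient f a, v⟫ + L * ‖v‖ ^ 2 * t) t := by
    refine ((((hasDerivAt_id t).mul_const _).const_add _).add
      (((hasDerivAt_id t).pow 2).const_mul _)).congr_deriv ?_
    simp only [id, Nat.cast_ofNat]
    ring
  have hslope : ∀ t ∈ Set.Ico (0 : ℝ) 1,
      ⟪gradient f (a + t • v), v⟫ ≤ ⟪gradient f a, v⟫ + L * ‖v‖ ^ 2 * t := by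
    intro t ht
    rw [← sub_le_iff_le_add', ← inner_sub_left]
    calc ⟪gradient f (a + t • v) - gradient f a, v⟫
        ≤ ‖gradient f (a + t • v) - gradient f a‖ * ‖v‖ := real_inner_le_norm _ _
      _ ≤ L * ‖a + t • v - a‖ * ‖v‖ := by gcongr; exact hsmooth _
      _ = L * ‖v‖ ^ 2 * t := by
        rw [add_sub_cancel_left, norm_smul, Real.norm_of_nonneg ht.1]
        ring
  have hle := image_le_of_deriv_right_le_deriv_boundary
    (fun t _ => (hf t).continuousAt.continuousWithinAt) (fun t _ => (hf t).hasDerivWithinAt)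
    (by simp) (fun t _ => (hB t).continuousAt.continuousWithinAt)
    (fun t _ => (hB t).hasDerivWithinAt) hslope (Set.right_mem_Icc.2 zero_le_one)
  simpa using hle

-- Compare `f` with its tangent plane at `b` in the point reached from `a` by a gradient step
-- for `f - ⟪∇f(b), ·⟫`.
theorem add_inner_gradient_add_norm_sq_le (hL : 0 < L) (hdiff : Differentiable ℝ f)
    (hsmooth : ∀ a b, ‖gradient f b - gradient f a‖ ≤ L * ‖b - a‖)
    (hconv : ∀ a b, f a + ⟪gradient f a, b - a⟫ ≤ f b) (a b : E) :
    f b + ⟪gradient f b, a - b⟫ + L⁻¹ / 2 * ‖gradient f a - gradient f b‖ ^ 2 ≤ f a := by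
  set g := gradient f a - gradient f b with hg
  have hupper : f (a - L⁻¹ • g) ≤ f a - L⁻¹ * ⟪gradient f a, g⟫ + L⁻¹ / 2 * ‖g‖ ^ 2 := by
    have h := le_add_inner_gradient_add_norm_sq hdiff (hsmooth a) (-(L⁻¹ • g))
    rw [← sub_eq_add_neg, inner_neg_right, real_inner_smul_right, norm_neg, norm_smul,
      Real.norm_of_nonneg (inv_pos.2 hL).le, ← sub_eq_add_neg] at h
    have hcoeff : L / 2 * (L⁻¹ * ‖g‖) ^ 2 = L⁻¹ / 2 * ‖g‖ ^ 2 := by field_simp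
    rwa [hcoeff] at h
  have hlower : f b + ⟪gradient f b, a - b⟫ - L⁻¹ * ⟪gradient f b, g⟫ ≤ f (a - L⁻¹ • g) := by
    have h := hconv b (a - L⁻¹ • g)
    rwa [sub_right_comm, inner_sub_right, real_inner_smul_right, ← add_sub_assoc] at h
  have hgap : ⟪gradient f a, g⟫ - ⟪gradient f b, g⟫ = ‖g‖ ^ 2 := by
    rw [← inner_sub_left, ← hg, real_inner_self_eq_norm_sq]
  linear_combination hupper + hlower - L⁻¹ * hgap

theorem inv_mul_norm_gradient_sub_sq_le_inner (hL : 0 < L) (hdiff : Differentiable ℝ f)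
    (hsmooth : ∀ a b, ‖gradient f b - gradient f a‖ ≤ L * ‖b - a‖)
    (hconv : ∀ a b, f a + ⟪gradient f a, b - a⟫ ≤ f b) (a b : E) :
    L⁻¹ * ‖gradient f a - gradient f b‖ ^ 2 ≤ ⟪gradient f a - gradient f b, a - b⟫ := by
  have hab := add_inner_gradient_add_norm_sq_le hL hdiff hsmooth hconv a b
  have hba := add_inner_gradient_add_norm_sq_le hL hdiff hsmooth hconv b a
  rw [norm_sub_rev, ← neg_sub a b, inner_neg_right] at hba
  rw [inner_sub_left]
  linarith

end Gradient

section Delay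

variable {E : Type*} [SeminormedAddCommGroup E]

theorem norm_sub_le_mul_of_norm_succ_sub_le {x : ℕ → E} {j k : ℕ} {C : ℝ} (hjk : j ≤ k)
    (hstep : ∀ i, j ≤ i → i < k → ‖x (i + 1) - x i‖ ≤ C) :
    ‖x k - x j‖ ≤ (k - j : ℕ) * C := by
  have hdist := dist_le_Ico_sum_of_dist_le (f := x) (d := fun _ => C) hjk fun hji hik => by
    rw [dist_eq_norm']
    exact hstep _ hji hik
  rwa [dist_eq_norm', Finset.sum_const, Nat.card_Ico, nsmul_eq_mul] at hdist

-- The delay `k - s k` may vary with `k` as long as it stays in `[0, τ]`; both inequalities are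
-- written without truncated subtraction.
theorem norm_sub_delayed_le [NormedSpace ℝ E] {G : E → E} {xstar : E} {L γ M : ℝ}
    {x : ℕ → E} {s : ℕ → ℕ} {τ k : ℕ} (hL : 0 ≤ L) (hγ : 0 ≤ γ)
    (hG : ∀ a, ‖G a‖ ≤ L * ‖a - xstar‖)
    (hs_le : ∀ k, s k ≤ k) (hs_delay : ∀ k, k ≤ s k + τ)
    (hx : ∀ k, x (k + 1) = x k - γ • G (x (s k)))
    (hM : ∀ l ∈ Finset.Icc (k - 2 * τ) k, ‖x l - xstar‖ ≤ M) :
    ‖x k - x (s k)‖ ≤ τ * (γ * (L * M)) := by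
  have hM0 : 0 ≤ M :=
    (norm_nonneg _).trans (hM k (Finset.right_mem_Icc.2 (Nat.sub_le _ _)))
  have hstep : ∀ i, s k ≤ i → i < k → ‖x (i + 1) - x i‖ ≤ γ * (L * M) := by
    intro i hki hik
    have hmem : s i ∈ Finset.Icc (k - 2 * τ) k := by
      have := hs_delay k
      have := hs_delay i
      have := hs_le i
      rw [Finset.mem_Icc]
      omega
    rw [hx, sub_sub_cancel_left, norm_neg, norm_smul, Real.norm_of_nonneg hγ]
    gcongr
    exact (hG _).trans (by gcongr; exact hM _ hmem)
  have hdelay : k - s k ≤ τ := Nat.sub_le_iff_le_add'.2 (hs_delay k)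
  calc ‖x k - x (s k)‖ ≤ (k - s k : ℕ) * (γ * (L * M)) :=
        norm_sub_le_mul_of_norm_succ_sub_le (hs_le k) hstep
    _ ≤ τ * (γ * (L * M)) := by gcongr

end Delay

theorem delayed_gradient_perturbation_bound_general
    {E : Type*} [NormedAddCommGroup E] [InnerProductSpace ℝ E] [CompleteSpace E]
    {f : E → ℝ} {L γ : ℝ} {τ : ℕ} (hL : 0 < L) (hdiff : Differentiable ℝ f)
    (hsmooth : ∀ a b, ‖gradient f b - gradient f a‖ ≤ L * ‖b - a‖)
    (hconv : ∀ a b, f a + ⟪gradient f a, b - a⟫ ≤ f b)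
    {xstar : E} (hmin : ∀ y, f xstar ≤ f y) (hγ0 : 0 ≤ γ) (hγ : γ ≤ 2 / L)
    {s : ℕ → ℕ} (hs_le : ∀ k, s k ≤ k) (hs_delay : ∀ k, k ≤ s k + τ)
    {x : ℕ → E} (hx : ∀ k, x (k + 1) = x k - γ • gradient f (x (s k))) (k : ℕ) :
    2 * γ * ⟪gradient f (x k) - gradient f (x (s k)), x k - γ • gradient f (x k) - xstar⟫
        + γ ^ 2 * ‖gradient f (x k) - gradient f (x (s k))‖ ^ 2
      ≤ (γ ^ 4 * L ^ 4 * (τ : ℝ) ^ 2 + 2 * γ ^ 2 * L ^ 2 * (τ : ℝ)) *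
        (Finset.Icc (k - 2 * τ) k).sup' (Finset.nonempty_Icc.mpr (Nat.sub_le k (2 * τ)))
          (fun ℓ => ‖x ℓ - xstar‖ ^ 2) := by
  have hgrad : gradient f xstar = 0 := gradient_eq_zero_of_forall_le hmin
  obtain ⟨m, -, hm⟩ := Finset.exists_mem_eq_sup'
    (Finset.nonempty_Icc.mpr (Nat.sub_le k (2 * τ))) (fun ℓ => ‖x ℓ - xstar‖ ^ 2)
  set M := ‖x m - xstar‖
  have hM : ∀ l ∈ Finset.Icc (k - 2 * τ) k, ‖x l - xstar‖ ≤ M := fun l hl =>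
    le_of_sq_le_sq (hm ▸ Finset.le_sup' (fun ℓ => ‖x ℓ - xstar‖ ^ 2) hl) (norm_nonneg _)
  have hgradient_sub : ‖gradient f (x k) - gradient f (x (s k))‖ ≤ γ * L ^ 2 * τ * M :=
    calc ‖gradient f (x k) - gradient f (x (s k))‖ ≤ L * ‖x k - x (s k)‖ := hsmooth _ _
      _ ≤ L * (τ * (γ * (L * M))) := by
        gcongr
        exact norm_sub_delayed_le hL.le hγ0 (by simpa [hgrad] using hsmooth xstar)
          hs_le hs_delay hx hM
      _ = γ * L ^ 2 * τ * M := by ring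
  have hgradient_step : ‖x k - γ • gradient f (x k) - xstar‖ ≤ M := by
    have hcoco := inv_mul_norm_gradient_sub_sq_le_inner hL hdiff hsmooth hconv (x k) xstar
    rw [hgrad, sub_zero] at hcoco
    rw [sub_right_comm]
    exact (norm_sub_smul_le_of_mul_norm_sq_le_inner hγ0 hγ hcoco).trans
      (hM k (Finset.right_mem_Icc.2 (Nat.sub_le _ _)))
  rw [hm]
  convert two_mul_inner_add_norm_sq_le hγ0 hgradient_sub hgradient_step using 2
  ring

/-- Lemma A.1 (Lemma `delayedgradient_1`): bound on the asynchrony-induced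
perturbation term for gradient descent with constant gradient delay `τ`.
The convention `x_j = x_0` for `j < 0` is realized by truncated natural
subtraction `k - τ`, and `(k − 2τ)_+` by `k - 2 * τ` in `ℕ`. -/
theorem delayed_gradient_perturbation_bound
    {d : ℕ} (f : EuclideanSpace ℝ (Fin d) → ℝ) (L μ γ : ℝ) (τ : ℕ)
    (hL : 0 < L) (hμ : 0 < μ)
    (hdiff : Differentiable ℝ f)
    (hsmooth : ∀ a b : EuclideanSpace ℝ (Fin d),
      ‖gradient f b - gradient f a‖ ≤ L * ‖b - a‖)
    (hsc : ∀ a b : EuclideanSpace ℝ (Fin d),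
      f a + ⟪gradient f a, b - a⟫ + μ / 2 * ‖b - a‖ ^ 2 ≤ f b)
    (xstar : EuclideanSpace ℝ (Fin d))
    (hmin : ∀ y, f xstar ≤ f y)
    (hγ0 : 0 < γ) (hγ : γ ≤ 2 / (μ + L))
    (x : ℕ → EuclideanSpace ℝ (Fin d))
    (hx : ∀ k : ℕ, x (k + 1) = x k - γ • gradient f (x (k - τ)))
    (ω : ℕ → ℝ)
    (hω : ∀ k : ℕ, ω k =
      2 * γ * ⟪gradient f (x k) - gradient f (x (k - τ)),
               x k - γ • gradient f (x k) - xstar⟫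
      + γ ^ 2 * ‖gradient f (x k) - gradient f (x (k - τ))‖ ^ 2) :
    ∀ k : ℕ, ω k ≤ (γ ^ 4 * L ^ 4 * (τ : ℝ) ^ 2 + 2 * γ ^ 2 * L ^ 2 * (τ : ℝ)) *
      (Finset.Icc (k - 2 * τ) k).sup'
        (Finset.nonempty_Icc.mpr (Nat.sub_le k (2 * τ)))
        (fun ℓ => ‖x ℓ - xstar‖ ^ 2) := by
  have hγL : γ ≤ 2 / L := hγ.trans (by gcongr; linarith)
  have hconv (a b) : f a + ⟪gradient f a, b - a⟫ ≤ f b :=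
    (le_add_of_nonneg_right (by positivity)).trans (hsc a b)
  exact fun k => hω k ▸ delayed_gradient_perturbation_bound_general hL hdiff hsmooth hconv hmin
    hγ0.le hγL (fun k => Nat.sub_le k τ) (fun k => Nat.sub_le_iff_le_add.1 le_rfl) hx k
end

section
/- Consider the PIAG setting, and let {x_k} be the PIAG iterates with maximum delay τ and step-size γ ∈ (0, 1/(L·(2τ+1))]. Then for every k ≥ 1 and any x⋆ ∈ X⋆: P(x_k) − P⋆ ≤ ( (1/(2γ))·‖x_0 − x⋆‖² + τ·(P(x_0) − P⋆) ) / (k + τ). -/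
/-!
Write `Δ_j = ‖x_{j+1} − x_j‖²`, `S_k = ∑_{k−τ ≤ j < k} Δ_j`, and let `a_k` be the gap
`P(x_k) − P(u)` to a point `u`. Smoothness, convexity and the optimality condition of the proximal
step bound `a_{k+1}` in two ways:

* against `u`: `a_{k+1} ≤ (‖x_k − u‖² − ‖x_{k+1} − u‖² − Δ_k) / (2γ) + L (τ+1) (S_k + Δ_k) / 2`;
* against `x_k`: `a_{k+1} ≤ a_k − Δ_k / γ + L ((τ+1) Δ_k + S_k) / 2`.

The first bound plus `k + τ` times the second controls the increments of
`(k+τ) a_k + ‖x_k − u‖² / (2γ)`. Each `Δ_j` enters at most `τ` of the sums `S_k`, all with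
`k ≤ j + τ`, so after summation the negative multiples of `Δ_j` absorb the delay terms as soon as
`γ L (2τ+1) ≤ 1`.
-/

open scoped InnerProductSpace Gradient

section DelayedDescent

open Finset

/-- The sum of the `τ` terms of `a` preceding index `k`. Truncated subtraction drops the terms of
negative index. -/
def delaySum (τ : ℕ) (a : ℕ → ℝ) (k : ℕ) : ℝ :=
  ∑ j ∈ Ico (k - τ) k, a j

lemma delaySum_succ (a : ℕ → ℝ) (τ k : ℕ) :
    delaySum (τ + 1) a (k + 1) = delaySum τ a k + a k := by
  rw [delaySum, delaySum, Nat.add_sub_add_right, sum_Ico_succ_top (Nat.sub_le k τ)]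

variable {a b c V : ℕ → ℝ} {τ : ℕ}

lemma sum_mul_delaySum_le (ha : ∀ j, 0 ≤ a j) (hc : Monotone c) (hc₀ : ∀ k, 0 ≤ c k) (τ K : ℕ) :
    ∑ k ∈ range K, c k * delaySum τ a k ≤ ∑ j ∈ range K, τ * c (j + τ) * a j := by
  simp_rw [delaySum, mul_sum]
  rw [sum_comm' (t' := range K) (s' := fun j => {k ∈ range K | j < k ∧ k ≤ j + τ})
    (by intro k j; simp only [mem_range, mem_Ico, mem_filter]; omega)]
  refine sum_le_sum fun j _ => ?_
  rw [← sum_mul]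
  refine mul_le_mul_of_nonneg_right ?_ (ha j)
  calc ∑ k ∈ range K with j < k ∧ k ≤ j + τ, c k
      ≤ ∑ k ∈ Ioc j (j + τ), c k :=
        sum_le_sum_of_subset_of_nonneg (fun k hk => mem_Ioc.2 (mem_filter.1 hk).2)
          fun k _ _ => hc₀ k
    _ ≤ #(Ioc j (j + τ)) • c (j + τ) :=
        sum_le_card_nsmul _ _ _ fun k hk => hc (mem_Ioc.1 hk).2
    _ = τ * c (j + τ) := by rw [Nat.card_Ioc, add_tsub_cancel_left, nsmul_eq_mul]

lemma le_zero_index_of_delayed_descent (ha : ∀ j, 0 ≤ a j) (hc : Monotone c) (hc₀ : ∀ k, 0 ≤ c k)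
    (hcb : ∀ j, τ * c (j + τ) ≤ b j)
    (hV : ∀ k, V (k + 1) ≤ V k + c k * delaySum τ a k - b k * a k) (K : ℕ) :
    V K ≤ V 0 := by
  have hdelay : ∑ k ∈ range K, c k * delaySum τ a k ≤ ∑ k ∈ range K, b k * a k :=
    (sum_mul_delaySum_le ha hc hc₀ τ K).trans <|
      sum_le_sum fun j _ => mul_le_mul_of_nonneg_right (hcb j) (ha j)
  have htelescope : V K - V 0 ≤ ∑ k ∈ range K, (c k * delaySum τ a k - b k * a k) := by
    rw [← sum_range_sub V]
    exact sum_le_sum fun k _ => by linarith [hV k]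
  rw [sum_sub_distrib] at htelescope
  linarith

/-- `a` plays the role of the optimality gaps, `D` of the squared distances to the comparison point,
and `Δ` of the squared step lengths. -/
lemma add_mul_gap_add_dist_le {a D Δ : ℕ → ℝ} {γ L : ℝ} {τ : ℕ} (hγ : 0 < γ) (hL : 0 ≤ L)
    (hγL : γ * (L * (2 * τ + 1)) ≤ 1) (hΔ : ∀ j, 0 ≤ Δ j)
    (hdist : ∀ k, a (k + 1) ≤ 1 / (2 * γ) * (D k - D (k + 1) - Δ k)
      + L * ((τ + 1) / 2 * (delaySum τ Δ k + Δ k)))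
    (hdesc : ∀ k, k + τ ≠ 0 → a (k + 1) ≤ a k - 1 / γ * Δ k
      + L * (1 / 2 * ((τ + 1) * Δ k + delaySum τ Δ k))) (K : ℕ) :
    (K + τ) * a K + 1 / (2 * γ) * D K ≤ τ * a 0 + 1 / (2 * γ) * D 0 := by
  have hhalf : 1 / (2 * γ) = 1 / γ / 2 := by field_simp
  have hstepsize : L * (2 * τ + 1) ≤ 1 / γ := by rwa [le_div_iff₀' hγ]
  have hincrement : ∀ k : ℕ, ((k + 1 : ℕ) + τ) * a (k + 1) + 1 / (2 * γ) * D (k + 1)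
      ≤ (k + τ) * a k + 1 / (2 * γ) * D k + L / 2 * (k + 2 * τ + 1) * delaySum τ Δ k
        - ((k + τ + 1 / 2) * (1 / γ) - L / 2 * (τ + 1) * (k + τ + 1)) * Δ k := by
    intro k
    have hweighted : (k + τ) * a (k + 1) ≤ (k + τ) * (a k - 1 / γ * Δ k
        + L * (1 / 2 * ((τ + 1) * Δ k + delaySum τ Δ k))) := by
      rcases eq_or_ne (k + τ) 0 with h | h
      · simp [show (k : ℝ) + τ = 0 by exact_mod_cast h]
      · exact mul_le_mul_of_nonneg_left (hdesc k h) (by positivity)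
    have := hdist k
    rw [hhalf] at this ⊢
    push_cast
    linarith
  have hmono : Monotone fun k : ℕ => L / 2 * (k + 2 * τ + 1) := fun i j hij => by
    dsimp only
    gcongr
  have habsorb : ∀ j : ℕ, τ * (L / 2 * ((j + τ : ℕ) + 2 * τ + 1))
      ≤ (j + τ + 1 / 2) * (1 / γ) - L / 2 * (τ + 1) * (j + τ + 1) := by
    intro j
    have hscaled : (j + τ + 1 / 2) * (L * (2 * τ + 1)) ≤ (j + τ + 1 / 2) * (1 / γ) := by gcongr
    have hslack : 0 ≤ L * (2 * j * τ + j + τ) := by positivity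
    push_cast
    linarith
  simpa using le_zero_index_of_delayed_descent
    (V := fun k => (k + τ) * a k + 1 / (2 * γ) * D k) hΔ hmono (fun k => by positivity) habsorb
    hincrement K

end DelayedDescent

section Smooth

variable {E : Type*} [NormedAddCommGroup E]

lemma nonneg_of_forall_norm_sub_le [Nontrivial E] {G : E → E} {l : ℝ}
    (hG : ∀ a b, ‖G b - G a‖ ≤ l * ‖b - a‖) : 0 ≤ l := by
  obtain ⟨a, b, hab⟩ := exists_pair_ne E
  exact nonneg_of_mul_nonneg_left ((norm_nonneg _).trans (hG a b))
    (norm_pos_iff.2 (sub_ne_zero.2 hab.symm))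

variable [InnerProductSpace ℝ E] [CompleteSpace E] {f : E → ℝ}

lemma hasDerivAt_comp_lineMap {a b : E} {t : ℝ}
    (hf : DifferentiableAt ℝ f (AffineMap.lineMap a b t)) :
    HasDerivAt (fun t : ℝ => f (AffineMap.lineMap a b t))
      ⟪∇ f (AffineMap.lineMap a b t), b - a⟫_ℝ t := by
  rw [inner_gradient_left]
  exact hf.hasFDerivAt.comp_hasDerivAt t AffineMap.hasDerivAt_lineMap

lemma add_inner_gradient_le_of_convexOn {S : Set E} (hc : ConvexOn ℝ S f) {a b : E} (ha : a ∈ S)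
    (hb : b ∈ S) (hf : DifferentiableAt ℝ f a) : f a + ⟪∇ f a, b - a⟫_ℝ ≤ f b := by
  have hderiv := hasDerivAt_comp_lineMap (a := a) (b := b) (t := 0) (by simpa using hf)
  have hslope := (hc.comp_affineMap (AffineMap.lineMap a b)).le_slope_of_hasDerivAt
    (x := 0) (y := 1) (by simpa using ha) (by simpa using hb) one_pos hderiv
  simp only [slope_def_field, Function.comp_apply, AffineMap.lineMap_apply_zero,
    AffineMap.lineMap_apply_one, sub_zero, div_one] at hslope
  linarith

lemma le_add_inner_gradient_add_sq {l : ℝ} {a : E} (hf : Differentiable ℝ f)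
    (hl : ∀ b, ‖∇ f b - ∇ f a‖ ≤ l * ‖b - a‖) (b : E) :
    f b ≤ f a + ⟪∇ f a, b - a⟫_ℝ + l / 2 * ‖b - a‖ ^ 2 := by
  have hφ (t : ℝ) := hasDerivAt_comp_lineMap (hf (AffineMap.lineMap a b t))
  have hquad (t : ℝ) : HasDerivAt
      (fun t : ℝ => f a + t * ⟪∇ f a, b - a⟫_ℝ + l / 2 * ‖b - a‖ ^ 2 * t ^ 2)
      (⟪∇ f a, b - a⟫_ℝ + l * ‖b - a‖ ^ 2 * t) t := by
    refine ((((hasDerivAt_id t).mul_const _).const_add _).add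
      (((hasDerivAt_id t).pow 2).const_mul _)).congr_deriv ?_
    simp only [id_eq]
    ring
  have hslope : ∀ t ∈ Set.Ico (0 : ℝ) 1, ⟪∇ f (AffineMap.lineMap a b t), b - a⟫_ℝ
      ≤ ⟪∇ f a, b - a⟫_ℝ + l * ‖b - a‖ ^ 2 * t := by
    intro t ht
    rw [← sub_le_iff_le_add', ← inner_sub_left]
    calc ⟪∇ f (AffineMap.lineMap a b t) - ∇ f a, b - a⟫_ℝ
        ≤ ‖∇ f (AffineMap.lineMap a b t) - ∇ f a‖ * ‖b - a‖ := real_inner_le_norm _ _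
      _ ≤ l * ‖AffineMap.lineMap a b t - a‖ * ‖b - a‖ := by gcongr; exact hl _
      _ = l * ‖b - a‖ ^ 2 * t := by
          rw [← dist_eq_norm (AffineMap.lineMap a b t), dist_lineMap_left, dist_eq_norm',
            Real.norm_of_nonneg ht.1]
          ring
  simpa using image_le_of_deriv_right_le_deriv_boundary
    (fun t _ => (hφ t).continuousAt.continuousWithinAt) (fun t _ => (hφ t).hasDerivWithinAt)
    (by simp) (fun t _ => (hquad t).continuousAt.continuousWithinAt)
    (fun t _ => (hquad t).hasDerivWithinAt) hslope (Set.right_mem_Icc.2 zero_le_one)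

lemma le_add_inner_gradient_of_convexOn {l : ℝ} {a : E} (hc : ConvexOn ℝ Set.univ f)
    (hf : Differentiable ℝ f) (hl : ∀ b, ‖∇ f b - ∇ f a‖ ≤ l * ‖b - a‖) (u y : E) :
    f y ≤ f u + ⟪∇ f a, y - u⟫_ℝ + l * (‖y - a‖ ^ 2 / 2) := by
  have hupper := le_add_inner_gradient_add_sq hf hl y
  have hlower := add_inner_gradient_le_of_convexOn hc (Set.mem_univ a) (Set.mem_univ u) (hf a)
  rw [← sub_sub_sub_cancel_right y u a, inner_sub_right]
  linarith

lemma le_add_inner_gradient_of_lipschitz {l : ℝ} (hf : Differentiable ℝ f)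
    (hl : ∀ a b, ‖∇ f b - ∇ f a‖ ≤ l * ‖b - a‖) (a u y : E) :
    f y ≤ f u + ⟪∇ f a, y - u⟫_ℝ + l * (‖y - u‖ ^ 2 / 2 + ‖u - a‖ * ‖y - u‖) := by
  have hupper := le_add_inner_gradient_add_sq hf (hl u) y
  have herror : ⟪∇ f u - ∇ f a, y - u⟫_ℝ ≤ l * ‖u - a‖ * ‖y - u‖ :=
    (real_inner_le_norm _ _).trans (mul_le_mul_of_nonneg_right (hl a u) (norm_nonneg _))
  rw [inner_sub_left] at herror
  linarith

end Smooth

section Path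

open Finset

variable {E : Type*} [SeminormedAddCommGroup E]

/-- The squared length of the step of the sequence `x` from index `j` to `j + 1`. -/
def sqStep (x : ℕ → E) (j : ℕ) : ℝ :=
  ‖x (j + 1) - x j‖ ^ 2

lemma sqStep_nonneg (x : ℕ → E) (j : ℕ) : 0 ≤ sqStep x j :=
  sq_nonneg _

variable {x : ℕ → E} {k s τ : ℕ}

lemma norm_sub_le_sum_norm_step (hsk : s ≤ k) :
    ‖x k - x s‖ ≤ ∑ j ∈ Ico s k, ‖x (j + 1) - x j‖ := by
  rw [← sum_Ico_sub x hsk]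
  exact norm_sum_le _ _

lemma card_Ico_le_of_sub_le (hs : k - τ ≤ s) : (#(Ico s k) : ℝ) ≤ τ := by
  rw [Nat.card_Ico]
  exact_mod_cast (by omega)

lemma sum_Ico_sqStep_le_delaySum (hs : k - τ ≤ s) :
    ∑ j ∈ Ico s k, sqStep x j ≤ delaySum τ (sqStep x) k :=
  sum_le_sum_of_subset_of_nonneg (Ico_subset_Ico_left hs) fun j _ _ => sqStep_nonneg x j

lemma norm_sub_sq_le_mul_delaySum (hs : k - τ ≤ s) (hsk : s ≤ k) :
    ‖x k - x s‖ ^ 2 ≤ τ * delaySum τ (sqStep x) k :=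
  calc ‖x k - x s‖ ^ 2
      ≤ (∑ j ∈ Ico s k, ‖x (j + 1) - x j‖) ^ 2 := by gcongr; exact norm_sub_le_sum_norm_step hsk
    _ ≤ #(Ico s k) * ∑ j ∈ Ico s k, sqStep x j := sq_sum_le_card_mul_sum_sq
    _ ≤ τ * delaySum τ (sqStep x) k :=
        mul_le_mul (card_Ico_le_of_sub_le hs) (sum_Ico_sqStep_le_delaySum hs)
          (sum_nonneg fun j _ => sqStep_nonneg x j) τ.cast_nonneg

lemma norm_sub_mul_le_delaySum (hs : k - τ ≤ s) (hsk : s ≤ k) {r : ℝ} (hr : 0 ≤ r) :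
    ‖x k - x s‖ * r ≤ 1 / 2 * (τ * r ^ 2 + delaySum τ (sqStep x) k) :=
  calc ‖x k - x s‖ * r
      ≤ (∑ j ∈ Ico s k, ‖x (j + 1) - x j‖) * r := by gcongr; exact norm_sub_le_sum_norm_step hsk
    _ ≤ ∑ j ∈ Ico s k, 1 / 2 * (r ^ 2 + sqStep x j) := by
        rw [sum_mul]
        refine sum_le_sum fun j _ => ?_
        rw [sqStep]
        linarith [two_mul_le_add_sq ‖x (j + 1) - x j‖ r]
    _ = 1 / 2 * (#(Ico s k) * r ^ 2 + ∑ j ∈ Ico s k, sqStep x j) := by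
        rw [← mul_sum, sum_add_distrib, sum_const, nsmul_eq_mul]
    _ ≤ 1 / 2 * (τ * r ^ 2 + delaySum τ (sqStep x) k) := by
        have := card_Ico_le_of_sub_le hs
        gcongr
        exact sum_Ico_sqStep_le_delaySum hs

end Path

section DelayedGradient

variable {E : Type*} [NormedAddCommGroup E] [InnerProductSpace ℝ E]
  {ι : Type*} [Fintype ι] {f : ι → E → ℝ} {w l : ι → ℝ}

lemma weighted_sum_le_add_inner (hw : ∀ i, 0 ≤ w i) {G : ι → E} {u y : E} {c : ℝ}
    (h : ∀ i, f i y ≤ f i u + ⟪G i, y - u⟫_ℝ + l i * c) :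
    ∑ i, w i * f i y ≤
      ∑ i, w i * f i u + ⟪∑ i, w i • G i, y - u⟫_ℝ + (∑ i, w i * l i) * c := by
  simp only [sum_inner, real_inner_smul_left, Finset.sum_mul, ← Finset.sum_add_distrib]
  exact Finset.sum_le_sum fun i _ => by linarith [mul_le_mul_of_nonneg_left (h i) (hw i)]

variable [CompleteSpace E] {x : ℕ → E} {s : ι → ℕ} {k τ : ℕ}

lemma weighted_sum_le_add_inner_delayed_of_convexOn (hw : ∀ i, 0 ≤ w i)
    (hconv : ∀ i, ConvexOn ℝ Set.univ (f i)) (hdiff : ∀ i, Differentiable ℝ (f i))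
    (hl₀ : ∀ i, 0 ≤ l i) (hl : ∀ i a b, ‖∇ (f i) b - ∇ (f i) a‖ ≤ l i * ‖b - a‖)
    (hs : ∀ i, k - τ ≤ s i) (hsk : ∀ i, s i ≤ k) (u : E) :
    ∑ i, w i * f i (x (k + 1)) ≤ ∑ i, w i * f i u
      + ⟪∑ i, w i • ∇ (f i) (x (s i)), x (k + 1) - u⟫_ℝ
      + (∑ i, w i * l i) * ((τ + 1) / 2 * (delaySum τ (sqStep x) k + sqStep x k)) := by
  refine weighted_sum_le_add_inner hw fun i => ?_
  refine (le_add_inner_gradient_of_convexOn (hconv i) (hdiff i) (hl i (x (s i))) u _).trans ?_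
  have hdelay : ‖x (k + 1) - x (s i)‖ ^ 2 ≤
      (τ + 1) * (delaySum τ (sqStep x) k + sqStep x k) := by
    have := norm_sub_sq_le_mul_delaySum (x := x) (k := k + 1) (τ := τ + 1)
      (by simpa using hs i) ((hsk i).trans k.le_succ)
    rwa [delaySum_succ, Nat.cast_add_one] at this
  have := hl₀ i
  gcongr
  linarith

lemma weighted_sum_le_add_inner_delayed_step (hw : ∀ i, 0 ≤ w i)
    (hdiff : ∀ i, Differentiable ℝ (f i))
    (hl₀ : ∀ i, 0 ≤ l i) (hl : ∀ i a b, ‖∇ (f i) b - ∇ (f i) a‖ ≤ l i * ‖b - a‖)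
    (hs : ∀ i, k - τ ≤ s i) (hsk : ∀ i, s i ≤ k) :
    ∑ i, w i * f i (x (k + 1)) ≤ ∑ i, w i * f i (x k)
      + ⟪∑ i, w i • ∇ (f i) (x (s i)), x (k + 1) - x k⟫_ℝ
      + (∑ i, w i * l i) * (1 / 2 * ((τ + 1) * sqStep x k + delaySum τ (sqStep x) k)) := by
  refine weighted_sum_le_add_inner hw fun i => ?_
  refine (le_add_inner_gradient_of_lipschitz (hdiff i) (hl i) (x (s i)) (x k) _).trans ?_
  have hdelay : ‖x k - x (s i)‖ * ‖x (k + 1) - x k‖ ≤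
      1 / 2 * (τ * sqStep x k + delaySum τ (sqStep x) k) :=
    norm_sub_mul_le_delaySum (hs i) (hsk i) (norm_nonneg _)
  have hsq : ‖x (k + 1) - x k‖ ^ 2 = sqStep x k := rfl
  have := hl₀ i
  gcongr
  linarith

end DelayedGradient

section Prox

variable {E : Type*} [NormedAddCommGroup E]

/-- `p` is a proximal point of `γ R` at `z`, that is, a minimizer of `‖· - z‖² / 2 + γ R`. -/
def IsProxPoint (γ : ℝ) (R : E → EReal) (z p : E) : Prop :=
  ∀ u : E, ((1 / 2 * ‖p - z‖ ^ 2 : ℝ) : EReal) + (γ : EReal) * R p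
    ≤ ((1 / 2 * ‖u - z‖ ^ 2 : ℝ) : EReal) + (γ : EReal) * R u

variable {R : E → EReal} {γ : ℝ} {x g z p u : E}

lemma IsProxPoint.ne_top (hp : IsProxPoint γ R z p) (hγ : 0 < γ) (hu : R u ≠ ⊤) : R p ≠ ⊤ := by
  intro htop
  have hle := hp u
  rw [htop, EReal.coe_mul_top_of_pos hγ, EReal.coe_add_top, top_le_iff] at hle
  refine EReal.add_ne_top (EReal.coe_ne_top _) ?_ hle
  induction h : R u with
  | bot => simp [EReal.coe_mul_bot_of_pos hγ]
  | coe r => exact_mod_cast EReal.coe_ne_top (γ * r)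
  | top => exact absurd h hu

variable [InnerProductSpace ℝ E]

/-- Convexity of an extended-real-valued function, as Jensen's inequality on segments. `ConvexOn` is
not available because `EReal` is not a module over `ℝ`. -/
def IsERealConvex (R : E → EReal) : Prop :=
  ∀ z w : E, ∀ θ : ℝ, 0 ≤ θ → θ ≤ 1 →
    R (θ • z + (1 - θ) • w) ≤ (θ : EReal) * R z + ((1 - θ : ℝ) : EReal) * R w

lemma IsProxPoint.le_of_segment (hp : IsProxPoint γ R z p) (hγ : 0 < γ) (hconv : IsERealConvex R)
    (hbot : ∀ z, R z ≠ ⊥) (hu : R u ≠ ⊤) {θ : ℝ} (hθ₀ : 0 ≤ θ) (hθ₁ : θ ≤ 1) :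
    1 / 2 * ‖p - z‖ ^ 2 + γ * (R p).toReal ≤ 1 / 2 * ‖θ • u + (1 - θ) • p - z‖ ^ 2
      + γ * (θ * (R u).toReal + (1 - θ) * (R p).toReal) := by
  have hcoe_u := EReal.coe_toReal hu (hbot u)
  have hcoe_p := EReal.coe_toReal (hp.ne_top hγ hu) (hbot p)
  have hle : ((1 / 2 * ‖p - z‖ ^ 2 : ℝ) : EReal) + (γ : EReal) * R p
      ≤ ((1 / 2 * ‖θ • u + (1 - θ) • p - z‖ ^ 2 : ℝ) : EReal)
        + (γ : EReal) * ((θ : EReal) * R u + ((1 - θ : ℝ) : EReal) * R p) :=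
    (hp _).trans <| add_le_add_right
      (mul_le_mul_of_nonneg_left (hconv u p θ hθ₀ hθ₁) (EReal.coe_nonneg.2 hγ.le)) _
  rw [← hcoe_u, ← hcoe_p] at hle
  exact_mod_cast hle

/-- The variational inequality `(z - p) / γ ∈ ∂R(p)`. -/
lemma IsProxPoint.mul_sub_le_inner (hp : IsProxPoint γ R z p) (hγ : 0 < γ)
    (hconv : IsERealConvex R) (hbot : ∀ z, R z ≠ ⊥) (hu : R u ≠ ⊤) :
    γ * ((R p).toReal - (R u).toReal) ≤ ⟪p - z, u - p⟫_ℝ := by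
  have hsegment : ∀ θ ∈ Set.Ioc (0 : ℝ) 1, γ * ((R p).toReal - (R u).toReal)
      ≤ ⟪p - z, u - p⟫_ℝ + θ * (‖u - p‖ ^ 2 / 2) := by
    intro θ hθ
    have hle := hp.le_of_segment hγ hconv hbot hu hθ.1.le hθ.2
    rw [show θ • u + (1 - θ) • p - z = (p - z) + θ • (u - p) by module, norm_add_sq_real,
      norm_smul, inner_smul_right, Real.norm_of_nonneg hθ.1.le] at hle
    refine le_of_mul_le_mul_left ?_ hθ.1
    linarith
  have hlim : Filter.Tendsto (fun θ : ℝ => ⟪p - z, u - p⟫_ℝ + θ * (‖u - p‖ ^ 2 / 2))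
      (nhdsWithin 0 (Set.Ioi 0)) (nhds ⟪p - z, u - p⟫_ℝ) :=
    (Continuous.tendsto' (by fun_prop) _ _ (by simp)).mono_left nhdsWithin_le_nhds
  exact ge_of_tendsto hlim
    (Filter.eventually_of_mem (Ioc_mem_nhdsGT zero_lt_one) hsegment)

lemma IsProxPoint.sub_le_of_gradient_step (hp : IsProxPoint γ R (x - γ • g) p) (hγ : 0 < γ)
    (hconv : IsERealConvex R) (hbot : ∀ z, R z ≠ ⊥) (hu : R u ≠ ⊤) :
    (R p).toReal - (R u).toReal ≤ -⟪g, p - u⟫_ℝ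
      + 1 / (2 * γ) * (‖x - u‖ ^ 2 - ‖p - u‖ ^ 2 - ‖p - x‖ ^ 2) := by
  have hpolar : ‖x - u‖ ^ 2 = ‖p - u‖ ^ 2 - 2 * ⟪p - x, p - u⟫_ℝ + ‖p - x‖ ^ 2 := by
    rw [← sub_sub_sub_cancel_left u x p, norm_sub_sq_real, real_inner_comm]
  have hinner : ⟪p - (x - γ • g), u - p⟫_ℝ = -⟪p - x, p - u⟫_ℝ - γ * ⟪g, p - u⟫_ℝ := by
    rw [← neg_sub p u, inner_neg_right, ← sub_add, inner_add_left, real_inner_smul_left]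
    ring
  refine le_of_mul_le_mul_left ?_ hγ
  calc γ * ((R p).toReal - (R u).toReal) ≤ ⟪p - (x - γ • g), u - p⟫_ℝ :=
        hp.mul_sub_le_inner hγ hconv hbot hu
    _ = γ * (-⟪g, p - u⟫_ℝ
          + 1 / (2 * γ) * (‖x - u‖ ^ 2 - ‖p - u‖ ^ 2 - ‖p - x‖ ^ 2)) := by
        rw [hinner, hpolar]
        field_simp
        ring

end Prox

section Rate

variable {E : Type*} [NormedAddCommGroup E] [InnerProductSpace ℝ E] [CompleteSpace E]
  {ι : Type*} [Fintype ι]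

/-- The sequence `x` is generated by the proximal incremental aggregated gradient method with step
size `γ` and maximum delay `τ` for the objective `∑ i, w i * f i + R`: every step is a proximal
gradient step in which the gradient of `f i` was evaluated at one of the iterates `x (k - τ)`, …,
`x k`. Truncated subtraction encodes `(k - τ)₊`. -/
def IsPIAG (w : ι → ℝ) (f : ι → E → ℝ) (R : E → EReal) (γ : ℝ) (τ : ℕ) (x : ℕ → E) : Prop :=
  ∀ k, ∃ s : ι → ℕ, (∀ i, k - τ ≤ s i ∧ s i ≤ k) ∧
    IsProxPoint γ R (x k - γ • ∑ i, w i • ∇ (f i) (x (s i))) (x (k + 1))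

/-- The value at `z` of the objective `∑ i, w i * f i + R` as a real number. It is meaningful only
where `R` is finite, since `EReal.toReal` sends `⊤` to `0`. -/
noncomputable def compositeValue (w : ι → ℝ) (f : ι → E → ℝ) (R : E → EReal) (z : E) : ℝ :=
  ∑ i, w i * f i z + (R z).toReal

variable {f : ι → E → ℝ} {w l : ι → ℝ} {R : E → EReal} {γ : ℝ} {τ : ℕ} {x : ℕ → E} {u : E}

lemma IsPIAG.apply_succ_ne_top (hx : IsPIAG w f R γ τ x) (hγ : 0 < γ) (hu : R u ≠ ⊤) (k : ℕ) :
    R (x (k + 1)) ≠ ⊤ :=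
  let ⟨_, _, hprox⟩ := hx k
  hprox.ne_top hγ hu

lemma IsPIAG.compositeValue_succ_sub_le (hx : IsPIAG w f R γ τ x) (hw : ∀ i, 0 ≤ w i)
    (hconv : ∀ i, ConvexOn ℝ Set.univ (f i)) (hdiff : ∀ i, Differentiable ℝ (f i))
    (hl₀ : ∀ i, 0 ≤ l i) (hl : ∀ i a b, ‖∇ (f i) b - ∇ (f i) a‖ ≤ l i * ‖b - a‖)
    (hRbot : ∀ z, R z ≠ ⊥) (hRconv : IsERealConvex R) (hγ : 0 < γ) (hu : R u ≠ ⊤) (k : ℕ) :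
    compositeValue w f R (x (k + 1)) - compositeValue w f R u
      ≤ 1 / (2 * γ) * (‖x k - u‖ ^ 2 - ‖x (k + 1) - u‖ ^ 2 - sqStep x k)
        + (∑ i, w i * l i) * ((τ + 1) / 2 * (delaySum τ (sqStep x) k + sqStep x k)) := by
  obtain ⟨s, hs, hprox⟩ := hx k
  have hsmooth := weighted_sum_le_add_inner_delayed_of_convexOn (x := x) hw hconv hdiff hl₀ hl
    (fun i => (hs i).1) (fun i => (hs i).2) u
  have hreg := hprox.sub_le_of_gradient_step hγ hRconv hRbot hu
  rw [← sqStep] at hreg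
  unfold compositeValue
  linarith

lemma IsPIAG.compositeValue_succ_le (hx : IsPIAG w f R γ τ x) (hw : ∀ i, 0 ≤ w i)
    (hdiff : ∀ i, Differentiable ℝ (f i))
    (hl₀ : ∀ i, 0 ≤ l i) (hl : ∀ i a b, ‖∇ (f i) b - ∇ (f i) a‖ ≤ l i * ‖b - a‖)
    (hRbot : ∀ z, R z ≠ ⊥) (hRconv : IsERealConvex R) (hγ : 0 < γ) {k : ℕ} (hk : R (x k) ≠ ⊤) :
    compositeValue w f R (x (k + 1)) ≤ compositeValue w f R (x k) - 1 / γ * sqStep x k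
      + (∑ i, w i * l i) * (1 / 2 * ((τ + 1) * sqStep x k + delaySum τ (sqStep x) k)) := by
  obtain ⟨s, hs, hprox⟩ := hx k
  have hsmooth := weighted_sum_le_add_inner_delayed_step (x := x) hw hdiff hl₀ hl
    (fun i => (hs i).1) (fun i => (hs i).2)
  have hreg := hprox.sub_le_of_gradient_step hγ hRconv hRbot hk
  rw [← sqStep, sub_self, norm_zero, show 1 / (2 * γ) * (0 ^ 2 - sqStep x k - sqStep x k) =
    -(1 / γ * sqStep x k) by field_simp; ring] at hreg
  unfold compositeValue
  linarith

/-- For `τ = 0` the starting point may lie outside the domain of `R`; the term containing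
`(R (x 0)).toReal` then has coefficient `0`. -/
lemma IsPIAG.add_mul_compositeValue_sub_le (hx : IsPIAG w f R γ τ x) (hw : ∀ i, 0 ≤ w i)
    (hconv : ∀ i, ConvexOn ℝ Set.univ (f i)) (hdiff : ∀ i, Differentiable ℝ (f i))
    (hl : ∀ i a b, ‖∇ (f i) b - ∇ (f i) a‖ ≤ l i * ‖b - a‖)
    (hRbot : ∀ z, R z ≠ ⊥) (hRconv : IsERealConvex R) (hγ : 0 < γ)
    (hγL : γ * ((∑ i, w i * l i) * (2 * τ + 1)) ≤ 1)
    (hu : R u ≠ ⊤) (hx₀ : τ = 0 ∨ R (x 0) ≠ ⊤) (k : ℕ) :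
    (k + τ) * (compositeValue w f R (x k) - compositeValue w f R u)
      ≤ 1 / (2 * γ) * ‖x 0 - u‖ ^ 2
        + τ * (compositeValue w f R (x 0) - compositeValue w f R u) := by
  rcases subsingleton_or_nontrivial E with hsub | hnt
  · simp [Subsingleton.elim (x k) u, Subsingleton.elim (x 0) u]
  have hl₀ : ∀ i, 0 ≤ l i := fun i => nonneg_of_forall_norm_sub_le (hl i)
  have hdom : ∀ j, j + τ ≠ 0 → R (x j) ≠ ⊤
    | 0, hτ => hx₀.resolve_left (by simpa using hτ)
    | j + 1, _ => hx.apply_succ_ne_top hγ hu j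
  have hpotential := add_mul_gap_add_dist_le
    (a := fun j => compositeValue w f R (x j) - compositeValue w f R u)
    (D := fun j => ‖x j - u‖ ^ 2) hγ (Finset.sum_nonneg fun i _ => mul_nonneg (hw i) (hl₀ i)) hγL
    (sqStep_nonneg x)
    (hx.compositeValue_succ_sub_le hw hconv hdiff hl₀ hl hRbot hRconv hγ hu)
    (fun j hj => by
      linarith [hx.compositeValue_succ_le hw hdiff hl₀ hl hRbot hRconv hγ (hdom j hj)]) k
  have : 0 ≤ 1 / (2 * γ) * ‖x k - u‖ ^ 2 := by positivity
  linarith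

lemma coe_sub_le_one_div_mul {m a b c : ℝ} (hm : 0 < m) (h : m * (a - b) ≤ c) :
    (a : EReal) - b ≤ ((1 / m : ℝ) : EReal) * c := by
  rw [← EReal.coe_sub, ← EReal.coe_mul, EReal.coe_le_coe_iff, one_div_mul_eq_div,
    le_div_iff₀' hm]
  exact h

theorem piag_convex_rate_general {P : E → EReal} (hx : IsPIAG w f R γ τ x) (hw : ∀ i, 0 ≤ w i)
    (hconv : ∀ i, ConvexOn ℝ Set.univ (f i)) (hdiff : ∀ i, Differentiable ℝ (f i))
    (hl : ∀ i a b, ‖∇ (f i) b - ∇ (f i) a‖ ≤ l i * ‖b - a‖)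
    (hRbot : ∀ z, R z ≠ ⊥) (hRconv : IsERealConvex R)
    (hP : ∀ z, P z = ((∑ i, w i * f i z : ℝ) : EReal) + R z) (hγ : 0 < γ)
    (hγL : γ * ((∑ i, w i * l i) * (2 * τ + 1)) ≤ 1) (hu : P u ≠ ⊤) {k : ℕ} (hk : 1 ≤ k) :
    P (x k) - P u ≤ ((1 / ((k : ℝ) + (τ : ℝ)) : ℝ) : EReal) *
      (((1 / (2 * γ) * ‖x 0 - u‖ ^ 2 : ℝ) : EReal) + ((τ : ℝ) : EReal) * (P (x 0) - P u)) := by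
  have hRu : R u ≠ ⊤ := fun h => hu (by rw [hP, h, EReal.coe_add_top])
  have hPcoe : ∀ z, R z ≠ ⊤ → P z = compositeValue w f R z := fun z hz => by
    rw [hP, compositeValue, EReal.coe_add, EReal.coe_toReal hz (hRbot z)]
  have hRx : R (x k) ≠ ⊤ := Nat.sub_add_cancel hk ▸ hx.apply_succ_ne_top hγ hRu (k - 1)
  have hkτ : (0 : ℝ) < k + τ := by positivity
  by_cases hx₀ : τ = 0 ∨ R (x 0) ≠ ⊤
  · have hinit : ((τ : ℝ) : EReal) * (P (x 0) - P u)
        = ((τ * (compositeValue w f R (x 0) - compositeValue w f R u) : ℝ) : EReal) := by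
      rcases hx₀ with rfl | hx₀
      · simp
      · rw [hPcoe _ hx₀, hPcoe _ hRu, EReal.coe_mul, EReal.coe_sub]
    rw [hinit, ← EReal.coe_add, hPcoe _ hRx, hPcoe _ hRu]
    exact coe_sub_le_one_div_mul hkτ
      (hx.add_mul_compositeValue_sub_le hw hconv hdiff hl hRbot hRconv hγ hγL hRu hx₀ k)
  · push Not at hx₀
    have hτ : (0 : ℝ) < τ := by exact_mod_cast Nat.pos_of_ne_zero hx₀.1
    rw [hP (x 0), hx₀.2, EReal.coe_add_top, hPcoe _ hRu, EReal.top_sub_coe,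
      EReal.coe_mul_top_of_pos hτ, EReal.coe_add_top, EReal.coe_mul_top_of_pos (by positivity)]
    exact le_top

end Rate

/-- Theorem 1 (PIAG, convex case): with step-size `γ ∈ (0, 1/(L(2τ+1))]`, for
every `k ≥ 1` and any optimal `x⋆`,
`P(x_k) − P⋆ ≤ ((1/2γ)‖x_0 − x⋆‖² + τ (P(x_0) − P⋆)) / (k + τ)`.
The division by the positive real `k + τ` is rendered as multiplication by its
inverse in `EReal`; the regularizer `R` is `EReal`-valued. -/
theorem piag_convex_rate
    {d n : ℕ} (hn : 0 < n)
    (f : Fin n → EuclideanSpace ℝ (Fin d) → ℝ)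
    (Li : Fin n → ℝ)
    (hconv : ∀ i, ConvexOn ℝ Set.univ (f i))
    (hdiff : ∀ i, Differentiable ℝ (f i))
    (hLi : ∀ i, ∀ a b : EuclideanSpace ℝ (Fin d),
      ‖gradient (f i) b - gradient (f i) a‖ ≤ Li i * ‖b - a‖)
    (R : EuclideanSpace ℝ (Fin d) → EReal)
    (hRne_top : ∃ z, R z ≠ ⊤)
    (hRne_bot : ∀ z, R z ≠ ⊥)
    (hRconvex : ∀ z w : EuclideanSpace ℝ (Fin d), ∀ θ : ℝ, 0 ≤ θ → θ ≤ 1 →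
      R (θ • z + (1 - θ) • w) ≤ (θ : EReal) * R z + ((1 - θ : ℝ) : EReal) * R w)
    (hRclosed : LowerSemicontinuous R)
    (F : EuclideanSpace ℝ (Fin d) → ℝ)
    (hF : ∀ z, F z = (1 / (n : ℝ)) * ∑ i, f i z)
    (L : ℝ) (hLdef : L = (1 / (n : ℝ)) * ∑ i, Li i)
    (P : EuclideanSpace ℝ (Fin d) → EReal)
    (hP : ∀ z, P z = (F z : EReal) + R z)
    (γ : ℝ) (hγ : 0 < γ) (τ : ℕ)
    (s : Fin n → ℕ → ℕ)
    (hs1 : ∀ i k, k - τ ≤ s i k) (hs2 : ∀ i k, s i k ≤ k)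
    (x : ℕ → EuclideanSpace ℝ (Fin d))
    (g : ℕ → EuclideanSpace ℝ (Fin d))
    (hg : ∀ k, g k = (1 / (n : ℝ)) • ∑ i, gradient (f i) (x (s i k)))
    (hprox : ∀ k : ℕ, ∀ u : EuclideanSpace ℝ (Fin d),
      (((1 / 2) * ‖x (k + 1) - (x k - γ • g k)‖ ^ 2 : ℝ) : EReal)
          + (γ : EReal) * R (x (k + 1))
        ≤ (((1 / 2) * ‖u - (x k - γ • g k)‖ ^ 2 : ℝ) : EReal) + (γ : EReal) * R u)
    (hL : 0 < L)
    (hγmax : γ ≤ 1 / (L * (2 * (τ : ℝ) + 1)))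
    (xstar : EuclideanSpace ℝ (Fin d))
    (hxstar : ∀ y, P xstar ≤ P y) :
    ∀ k : ℕ, 1 ≤ k →
      P (x k) - P xstar
        ≤ ((1 / ((k : ℝ) + (τ : ℝ)) : ℝ) : EReal) *
            ((((1 / (2 * γ)) * ‖x 0 - xstar‖ ^ 2 : ℝ) : EReal)
              + ((τ : ℝ) : EReal) * (P (x 0) - P xstar)) := by
  obtain ⟨z, hz⟩ := hRne_top
  have hPstar : P xstar ≠ ⊤ := ne_top_of_le_ne_top
    (hP z ▸ EReal.add_ne_top (EReal.coe_ne_top _) hz) (hxstar z)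
  have hx : IsPIAG (fun _ => 1 / (n : ℝ)) f R γ τ x := fun k =>
    ⟨(s · k), fun i => ⟨hs1 i k, hs2 i k⟩, by rw [← Finset.smul_sum, ← hg]; exact hprox k⟩
  have hγL : γ * ((∑ i, 1 / (n : ℝ) * Li i) * (2 * τ + 1)) ≤ 1 := by
    rw [← Finset.mul_sum, ← hLdef]
    exact (le_div_iff₀ (by positivity)).1 hγmax
  exact fun k hk => piag_convex_rate_general hx (fun _ => by positivity) hconv hdiff hLi hRne_bot
    hRconvex (fun z => by rw [hP, hF, Finset.mul_sum]) hγ hγL hPstar hk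
end

section
/- Consider the asynchronous fixed-point setting with T a pseudo-contraction with respect to the block-maximum norm with contraction modulus c ∈ (0,1) and fixed point x⋆. Let V_k = ‖x_k − x⋆‖ in the block-maximum norm. Then the iterates {x_k} of the asynchronous iteration satisfy V_{k+1} ≤ c · max_{(k−τ_k)_+ ≤ ℓ ≤ k} V_ℓ for all k ≥ 0, where τ_k = k − min_{i∈[m]} min_{j∈[m]} s_{ij, t_i(k)}. -/
/-!
At time `k + 1` block `i` still holds the value it received at its last update time `t i ≤ k`, that
is, the `i`-th component of `T` at the point assembled from the outdated blocks `x (s i j (t i)) j`.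
The contraction property bounds the error of this component by `c` times the block-maximum error of
the assembled point. Since the norm is a maximum over blocks, the latter is at most the largest of
the errors of the full iterates `x (s i j (t i))`, all of which lie in the delay window.
-/

section BlockMaxNorm

variable {ι : Type*} [Fintype ι] [Nonempty ι] {E : ι → Type*} [∀ i, Norm (E i)]

/-- The block-maximum norm `max_i w i * ‖z i‖` on a finite nonempty product. The weights are
arbitrary reals; it is a norm in the usual sense when they are positive. -/
noncomputable def blockMaxNorm (w : ι → ℝ) (z : ∀ i, E i) : ℝ :=
  Finset.univ.sup' Finset.univ_nonempty fun i => w i * ‖z i‖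

theorem mul_norm_le_blockMaxNorm (w : ι → ℝ) (z : ∀ i, E i) (i : ι) :
    w i * ‖z i‖ ≤ blockMaxNorm w z :=
  Finset.le_sup' (fun i => w i * ‖z i‖) (Finset.mem_univ i)

theorem blockMaxNorm_le_iff {w : ι → ℝ} {z : ∀ i, E i} {b : ℝ} :
    blockMaxNorm w z ≤ b ↔ ∀ i, w i * ‖z i‖ ≤ b := by
  simp [blockMaxNorm]

end BlockMaxNorm

theorem apply_succ_eq_of_isGreatest {α : Type*} {u : ℕ → α} {K : Set ℕ} {k t : ℕ}
    (hu : ∀ n ∉ K, u (n + 1) = u n) (ht : IsGreatest {n ∈ K | n ≤ k} t) :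
    u (k + 1) = u (t + 1) := by
  suffices const : ∀ n, t ≤ n → n ≤ k → u (n + 1) = u (t + 1) from const k ht.1.2 le_rfl
  intro n htn
  induction n, htn using Nat.le_induction with
  | base => exact fun _ => rfl
  | succ n htn ih =>
    intro hnk
    have not_update : n + 1 ∉ K := fun hK => by
      have : n + 1 ≤ t := ht.2 ⟨hK, hnk⟩
      omega
    rw [hu _ not_update, ih (by omega)]

section AsyncDelay

variable {ι : Type*} [Fintype ι] [Nonempty ι]

/-- The delay `τ_k = k - min_i min_j s i j (t i)` at time `k`, where `t i` is the last update time
of block `i`. The subtraction is truncated, so the delay is `0` if all information times are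
at least `k`. -/
def asyncDelay (s : ι → ι → ℕ → ℕ) (t : ι → ℕ) (k : ℕ) : ℕ :=
  k - Finset.univ.inf' Finset.univ_nonempty fun i =>
    Finset.univ.inf' Finset.univ_nonempty fun j => s i j (t i)

theorem sub_asyncDelay_le (s : ι → ι → ℕ → ℕ) (t : ι → ℕ) (k : ℕ) (i j : ι) :
    k - asyncDelay s t k ≤ s i j (t i) := by
  have min_le : (Finset.univ.inf' Finset.univ_nonempty fun i =>
      Finset.univ.inf' Finset.univ_nonempty fun j => s i j (t i)) ≤ s i j (t i) :=
    (Finset.inf'_le _ (Finset.mem_univ i)).trans (Finset.inf'_le _ (Finset.mem_univ j))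
  unfold asyncDelay
  omega

end AsyncDelay

/-- The sequence `x` is generated by the asynchronous iteration of `T`, where `K i` is the set of
update times of block `i`, and `s i j k` is the time stamp of the copy of block `j` that block `i`
reads at time `k`. -/
structure IsAsyncIteration {ι : Type*} {E : ι → Type*} (T : (∀ i, E i) → ∀ i, E i)
    (K : ι → Set ℕ) (s : ι → ι → ℕ → ℕ) (x : ℕ → ∀ i, E i) : Prop where
  infoTime_le : ∀ i j k, s i j k ≤ k
  update : ∀ k i, k ∈ K i → x (k + 1) i = T (fun j => x (s i j k) j) i
  skip : ∀ k i, k ∉ K i → x (k + 1) i = x k i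

namespace IsAsyncIteration

variable {ι : Type*} {E : ι → Type*} {T : (∀ i, E i) → ∀ i, E i} {K : ι → Set ℕ}
  {s : ι → ι → ℕ → ℕ} {x : ℕ → ∀ i, E i} {k : ℕ}

theorem apply_succ_eq (hx : IsAsyncIteration T K s x) {i : ι} {t : ℕ}
    (ht : IsGreatest {n ∈ K i | n ≤ k} t) :
    x (k + 1) i = T (fun j => x (s i j t) j) i :=
  calc
    x (k + 1) i = x (t + 1) i :=
      apply_succ_eq_of_isGreatest (u := fun n => x n i) (fun n => hx.skip n i) ht
    _ = T (fun j => x (s i j t) j) i := hx.update t i ht.1.1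

theorem blockMaxNorm_succ_sub_le_mul [Fintype ι] [Nonempty ι] [∀ i, SeminormedAddCommGroup (E i)]
    (hx : IsAsyncIteration T K s x) {w : ι → ℝ} {c b : ℝ} (hc : 0 ≤ c) {xstar : ∀ i, E i}
    (hT : ∀ z, blockMaxNorm w (T z - xstar) ≤ c * blockMaxNorm w (z - xstar))
    {t : ι → ℕ} (ht : ∀ i, IsGreatest {n ∈ K i | n ≤ k} (t i))
    (hb : ∀ i j, blockMaxNorm w (x (s i j (t i)) - xstar) ≤ b) :
    blockMaxNorm w (x (k + 1) - xstar) ≤ c * b := by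
  refine blockMaxNorm_le_iff.2 fun i => ?_
  let z : ∀ j, E j := fun j => x (s i j (t i)) j
  have assembled_le : blockMaxNorm w (z - xstar) ≤ b :=
    blockMaxNorm_le_iff.2 fun j =>
      (mul_norm_le_blockMaxNorm w (x (s i j (t i)) - xstar) j).trans (hb i j)
  calc
    w i * ‖(x (k + 1) - xstar) i‖ = w i * ‖(T z - xstar) i‖ := by
      rw [Pi.sub_apply, Pi.sub_apply, hx.apply_succ_eq (ht i)]
    _ ≤ blockMaxNorm w (T z - xstar) := mul_norm_le_blockMaxNorm w _ i
    _ ≤ c * blockMaxNorm w (z - xstar) := hT z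
    _ ≤ c * b := mul_le_mul_of_nonneg_left assembled_le hc

end IsAsyncIteration

theorem async_pseudocontraction_lyapunov_general {ι : Type*} [Fintype ι] [Nonempty ι]
    {E : ι → Type*} [∀ i, SeminormedAddCommGroup (E i)] {w : ι → ℝ}
    {T : (∀ i, E i) → ∀ i, E i} {c : ℝ} (hc : 0 ≤ c) {xstar : ∀ i, E i}
    (hT : ∀ z, blockMaxNorm w (T z - xstar) ≤ c * blockMaxNorm w (z - xstar))
    {K : ι → Set ℕ} {s : ι → ι → ℕ → ℕ} {x : ℕ → ∀ i, E i} (hx : IsAsyncIteration T K s x)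
    {k : ℕ} {t : ι → ℕ} (ht : ∀ i, IsGreatest {n ∈ K i | n ≤ k} (t i)) :
    blockMaxNorm w (x (k + 1) - xstar) ≤
      c * (Finset.Icc (k - asyncDelay s t k) k).sup' (Finset.nonempty_Icc.mpr (Nat.sub_le k _))
        fun l => blockMaxNorm w (x l - xstar) := by
  refine hx.blockMaxNorm_succ_sub_le_mul hc hT ht fun i j => ?_
  have mem_window : s i j (t i) ∈ Finset.Icc (k - asyncDelay s t k) k :=
    Finset.mem_Icc.2 ⟨sub_asyncDelay_le s t k i j, (hx.infoTime_le i j (t i)).trans (ht i).1.2⟩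
  exact Finset.le_sup' (fun l => blockMaxNorm w (x l - xstar)) mem_window

/-- Lemma 7 (Section `ContractiveMapping`, Lemma 1): for the asynchronous
iteration of a block-maximum-norm pseudo-contraction `T` with modulus `c`,
the Lyapunov function `V_k = ‖x_k − x⋆‖` (block-maximum norm) satisfies
`V_{k+1} ≤ c · max_{(k−τ_k)_+ ≤ ℓ ≤ k} V_ℓ`, where
`τ_k = k − min_i min_j s_{ij, t_i(k)}` and `t_i(k)` is the most recent update
time of agent `i`.  Each block is a finite-dimensional real normed space
(modelling `ℝ^{d_i}` with an arbitrary norm), `(·)_+` is truncated natural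
subtraction. -/
theorem async_pseudocontraction_lyapunov
    {m : ℕ} (hm : 0 < m)
    (Bl : Fin m → Type*) [∀ i, NormedAddCommGroup (Bl i)]
    [∀ i, NormedSpace ℝ (Bl i)] [∀ i, FiniteDimensional ℝ (Bl i)]
    (w : Fin m → ℝ) (hw : ∀ i, 0 < w i)
    (bmNorm : (∀ i, Bl i) → ℝ)
    (hbm : ∀ z : ∀ i, Bl i, bmNorm z =
      (Finset.univ : Finset (Fin m)).sup'
        (Finset.univ_nonempty_iff.mpr ⟨⟨0, hm⟩⟩) (fun i => w i * ‖z i‖))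
    (T : (∀ i, Bl i) → (∀ i, Bl i))
    (c : ℝ) (hc0 : 0 < c) (hc1 : c < 1)
    (xstar : ∀ i, Bl i) (hfix : T xstar = xstar)
    (hcontr : ∀ z, bmNorm (T z - xstar) ≤ c * bmNorm (z - xstar))
    (K : Fin m → Set ℕ) (hK0 : ∀ i, 0 ∈ K i)
    (s : Fin m → Fin m → ℕ → ℕ)
    (hs_le : ∀ i j k, s i j k ≤ k)
    (x : ℕ → ∀ i, Bl i)
    (hupd : ∀ k : ℕ, ∀ i, k ∈ K i → x (k + 1) i = T (fun j => x (s i j k) j) i)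
    (hskip : ∀ k : ℕ, ∀ i, k ∉ K i → x (k + 1) i = x k i)
    (t : Fin m → ℕ → ℕ)
    (ht_mem : ∀ i k, t i k ≤ k ∧ t i k ∈ K i)
    (ht_max : ∀ i k κ, κ ≤ k → κ ∈ K i → κ ≤ t i k)
    (τk : ℕ → ℕ)
    (hτk : ∀ k, τk k = k -
      (Finset.univ : Finset (Fin m)).inf'
        (Finset.univ_nonempty_iff.mpr ⟨⟨0, hm⟩⟩)
        (fun i => (Finset.univ : Finset (Fin m)).inf'
          (Finset.univ_nonempty_iff.mpr ⟨⟨0, hm⟩⟩)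
          (fun j => s i j (t i k))))
    (V : ℕ → ℝ) (hV : ∀ k, V k = bmNorm (x k - xstar)) :
    ∀ k : ℕ, V (k + 1) ≤
      c * (Finset.Icc (k - τk k) k).sup'
            (Finset.nonempty_Icc.mpr (Nat.sub_le k (τk k))) V := by
  intro k
  have : Nonempty (Fin m) := ⟨⟨0, hm⟩⟩
  obtain rfl : bmNorm = blockMaxNorm w := funext hbm
  obtain rfl : V = fun k => blockMaxNorm w (x k - xstar) := funext hV
  obtain rfl : τk = fun k => asyncDelay s (fun i => t i k) k := funext hτk
  exact async_pseudocontraction_lyapunov_general hc0.le hcontr ⟨hs_le, hupd, hskip⟩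
    fun i => ⟨(ht_mem i k).symm, fun n hn => ht_max i k n hn.2 hn.1⟩
end
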